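/- arXiv:1105.5105 — 2 statements merged into one kernel-verified Lean document; each statement's English description precedes it below -/
import Mathlib

section
/- Consider the random walk in an i.i.d. random environment on Z^d (d ≥ 2). If there exists a nonempty orthogonal set V ⊆ E such that μ(G_o ∩ V ≠ ∅) = 1, then P-almost surely the walk visits infinitely many distinct sites. If no such orthogonal set exists, then P-almost surely the walk visits only finitely many sites. -/
/-!
Suppose first that an orthogonal set `V` with `μ(G_o ∩ V ≠ ∅) = 1` exists. Then almost every
environment allows, at every site, a step that increases `φ(x) = ∑_{u ∈ V} u · x`. Fix a finite
set `F`. The quenched probability of staying in `F` up to time `n` decreases to a function that is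
harmonic on `F` and zero off `F`; at a maximiser with the largest value of `φ`, harmonicity forces
the step increasing `φ` to lead to another maximiser, so the maximum is `0` (`tendsto_stay`).
Hence the walk leaves every finite set almost surely (`ae_infinite_range`).

Suppose now that no such `V` exists. For a sign pattern `b`, the outward steps at the corner `b` of
a unit cube form an orthogonal set, so with positive probability the environment at that corner
forbids them all (`measure_blocked_ne_zero`). By independence each unit cube is, with a fixed
probability `p > 0`, a trap that the walk cannot leave. When the walk first leaves `[-2N, 2N]^d`,
the unit cube at the exit site pointing away from the origin lies outside that box, so its
environment is independent of the past; if it is a trap, the walk stays in `[-2(N+1), 2(N+1)]^d`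
(`measure_cyl_esc_le`). Summing over first exit paths, the probability of leaving the box number
`N + 1` is at most `1 - p` times that of leaving the box number `N`, and so the walk is almost
surely bounded (`ae_finite_range`).
-/

open MeasureTheory Filter Set Topology
open scoped Classical ENNReal

noncomputable section

/-- Lattice sites of `ℤ^d`. -/
abbrev Site (d : ℕ) := Fin d → ℤ

/-- The `2d` unit vectors `±e_i` of `ℤ^d`, indexed by `Fin d × Bool`
(`true` for `+e_i`, `false` for `-e_i`). -/
def stepVec (d : ℕ) (i : Fin d × Bool) : Site d :=
  if i.2 = true then Pi.single i.1 1 else -Pi.single i.1 1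

/-- An element of `𝒫`: a probability measure on the set `E` of unit vectors of `ℤ^d`,
recorded via its probability mass function on lattice vectors. -/
structure EnvDist (d : ℕ) where
  prob : Site d → ℝ
  nonneg : ∀ v, 0 ≤ prob v
  support : ∀ v, prob v ≠ 0 → ∃ i, v = stepVec d i
  total : ∑ i : Fin d × Bool, prob (stepVec d i) = 1

instance {d : ℕ} : MeasurableSpace (EnvDist d) :=
  MeasurableSpace.comap EnvDist.prob inferInstance

/-- Environments: an element of `𝒫` at every site. -/
abbrev EnvOmega (d : ℕ) := Site d → EnvDist d

/-- Path space for the walk. -/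
abbrev PathSpace (d : ℕ) := ℕ → Site d

/-- Sample space for the annealed walk: environment together with path. -/
abbrev RWSpace (d : ℕ) := EnvOmega d × PathSpace d

/-- Dot product of a lattice vector with a real vector. -/
def dotR {d : ℕ} (x : Site d) (l : Fin d → ℝ) : ℝ := ∑ i, (x i : ℝ) * l i

/-- Dot product of two lattice vectors. -/
def dotZ {d : ℕ} (x y : Site d) : ℤ := ∑ i, x i * y i

/-- Quenched probability that the walk follows the steps of `x` for its first `n` steps. -/
def pathWeight {d : ℕ} (ω : EnvOmega d) (n : ℕ) (x : ℕ → Site d) : ℝ :=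
  ∏ k ∈ Finset.range n, (ω (x k)).prob (x (k + 1) - x k)

/-- `ν` is the product measure `μ^{⊗ℤ^d}`, i.e. the coordinates are i.i.d. with law `μ`. -/
def IsIIDEnv {d : ℕ} (μ : Measure (EnvDist d)) (ν : Measure (EnvOmega d)) : Prop :=
  IsProbabilityMeasure μ ∧ IsProbabilityMeasure ν ∧
    ∀ (s : Finset (Site d)) (A : Site d → Set (EnvDist d)),
      (∀ x ∈ s, MeasurableSet (A x)) →
      ν {ω | ∀ x ∈ s, ω x ∈ A x} = ∏ x ∈ s, μ (A x)

/-- `P` is the annealed law of the RWRE started at the origin in an i.i.d. environment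
with marginal `μ`: the environment marginal is the i.i.d. product, and the cylinder
probabilities are given by averaging the quenched Markov-chain probabilities. -/
def IsRWRE {d : ℕ} (μ : Measure (EnvDist d)) (P : Measure (RWSpace d)) : Prop :=
  IsProbabilityMeasure P ∧ IsIIDEnv μ (P.map Prod.fst) ∧
    ∀ (n : ℕ) (x : ℕ → Site d) (A : Set (EnvOmega d)), MeasurableSet A →
      (P {q | q.1 ∈ A ∧ ∀ k ≤ n, q.2 k = x k}).toReal =
        (if x 0 = 0 then (1 : ℝ) else 0) * ∫ ω in A, pathWeight ω n x ∂(P.map Prod.fst)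

/-- `Q` is the quenched law `ℙ_ω` of the walk in the fixed environment `ω`, started at the
origin. -/
def IsQuenchedRW {d : ℕ} (ω : EnvOmega d) (Q : Measure (PathSpace d)) : Prop :=
  IsProbabilityMeasure Q ∧
    ∀ (n : ℕ) (x : ℕ → Site d),
      (Q {w | ∀ k ≤ n, w k = x k}).toReal =
        (if x 0 = 0 then (1 : ℝ) else 0) * pathWeight ω n x

/-- `x → y`: there is a directed path from `x` to `y` in the graph `G(ω)`. -/
def Reaches {d : ℕ} (ω : EnvOmega d) : Site d → Site d → Prop :=
  Relation.ReflTransGen (fun a b => 0 < (ω a).prob (b - a))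

/-- The forward cluster `C_x`. -/
def clusterC {d : ℕ} (ω : EnvOmega d) (x : Site d) : Set (Site d) := {y | Reaches ω x y}

/-- The mutually connected cluster `M_x = C_x ∩ B_x`. -/
def clusterM {d : ℕ} (ω : EnvOmega d) (x : Site d) : Set (Site d) :=
  {y | Reaches ω x y ∧ Reaches ω y x}

/-- The local drift `u = ∑_e γ(e) e` of an environment value `γ`. -/
def drift {d : ℕ} (γ : EnvDist d) : Fin d → ℝ :=
  fun i => ∑ k : Fin d × Bool, γ.prob (stepVec d k) * ((stepVec d k i : ℤ) : ℝ)

/-- `N_n`: the number of times before time `n` at which the walk sits on a site whose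
environment equals `γ`. -/
def envCount {d : ℕ} (γ : EnvDist d) (q : RWSpace d) (n : ℕ) : ℕ :=
  Set.ncard {m : ℕ | m < n ∧ q.1 (q.2 m) = γ}

end

namespace RWREFinite

open ProbabilityTheory

variable {d : ℕ}

/-! ### Cylinder events and almost sure properties of the path -/

/-- The event that the walk follows `x` up to and including time `n`. -/
def cyl (n : ℕ) (x : ℕ → Site d) : Set (RWSpace d) := {q | ∀ k ≤ n, q.2 k = x k}

/-- Extension of a finite path `y_0, …, y_n` to an infinite sequence (by the junk value `0`),
which makes the cylinder events indexable by a countable type. -/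
def extPath (n : ℕ) (y : Fin (n + 1) → Site d) : ℕ → Site d :=
  fun j => if h : j < n + 1 then y ⟨j, h⟩ else 0

lemma extPath_of_le {n j : ℕ} (y : Fin (n + 1) → Site d) (h : j ≤ n) :
    extPath n y j = y ⟨j, Nat.lt_succ_of_le h⟩ := by
  simp [extPath, Nat.lt_succ_of_le h]

lemma measurableSet_cyl (n : ℕ) (x : ℕ → Site d) : MeasurableSet (cyl n x) := by
  have : cyl n x = ⋂ k, ⋂ (_ : k ≤ n), (fun q : RWSpace d => q.2 k) ⁻¹' {x k} := by
    ext q; simp [cyl]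
  rw [this]
  refine MeasurableSet.iInter fun k => MeasurableSet.iInter fun _ => ?_
  exact ((measurable_pi_apply k).comp measurable_snd) (measurableSet_singleton _)

lemma measurable_prob (v : Site d) : Measurable fun γ : EnvDist d => γ.prob v :=
  (measurable_pi_apply v).comp (comap_measurable EnvDist.prob)

lemma measurable_envProb (x v : Site d) : Measurable fun ω : EnvOmega d => (ω x).prob v :=
  (measurable_prob v).comp (measurable_pi_apply x)

lemma measurable_pathWeight (n : ℕ) (x : ℕ → Site d) :
    Measurable fun ω : EnvOmega d => pathWeight ω n x := by
  unfold pathWeight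
  exact Finset.measurable_prod _ fun k _ => measurable_envProb _ _

lemma prob_le_one (γ : EnvDist d) (v : Site d) : γ.prob v ≤ 1 := by
  by_cases h : γ.prob v = 0
  · simp [h]
  · obtain ⟨i, rfl⟩ := γ.support v h
    rw [← γ.total]
    exact Finset.single_le_sum (f := fun i => γ.prob (stepVec d i))
      (fun i _ => γ.nonneg _) (Finset.mem_univ i)

lemma pathWeight_nonneg (ω : EnvOmega d) (n : ℕ) (x : ℕ → Site d) : 0 ≤ pathWeight ω n x :=
  Finset.prod_nonneg fun _ _ => (ω _).nonneg _

lemma pathWeight_le_one (ω : EnvOmega d) (n : ℕ) (x : ℕ → Site d) : pathWeight ω n x ≤ 1 :=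
  Finset.prod_le_one (fun _ _ => (ω _).nonneg _) fun _ _ => prob_le_one _ _

section

variable {μ : Measure (EnvDist d)} {P : Measure (RWSpace d)}

/-- The defining formula of the annealed law, as an identity in `ℝ≥0∞`. -/
lemma measure_inter_cyl (hP : IsRWRE μ P) (n : ℕ) (x : ℕ → Site d) {A : Set (EnvOmega d)}
    (hA : MeasurableSet A) :
    P (Prod.fst ⁻¹' A ∩ cyl n x) =
      (if x 0 = 0 then 1 else 0) *
        ∫⁻ ω in A, ENNReal.ofReal (pathWeight ω n x) ∂(P.map Prod.fst) := by
  have := hP.1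
  have : IsProbabilityMeasure (P.map Prod.fst) := hP.2.1.2.1
  have hint : Integrable (fun ω => pathWeight ω n x) ((P.map Prod.fst).restrict A) := by
    refine Integrable.of_bound (measurable_pathWeight n x).aestronglyMeasurable 1 ?_
    refine Eventually.of_forall fun ω => ?_
    rw [Real.norm_of_nonneg (pathWeight_nonneg _ _ _)]
    exact pathWeight_le_one _ _ _
  rw [← ofReal_integral_eq_lintegral_ofReal hint
    (Eventually.of_forall fun ω => pathWeight_nonneg _ _ _)]
  have h := hP.2.2 n x A hA
  have hset : {q : RWSpace d | q.1 ∈ A ∧ ∀ k ≤ n, q.2 k = x k} = Prod.fst ⁻¹' A ∩ cyl n x := rfl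
  rw [hset] at h
  rw [← ENNReal.ofReal_toReal (measure_ne_top P (Prod.fst ⁻¹' A ∩ cyl n x)), h]
  split_ifs <;> simp

lemma measure_cyl (hP : IsRWRE μ P) (n : ℕ) (x : ℕ → Site d) :
    P (cyl n x) = (if x 0 = 0 then 1 else 0) *
        ∫⁻ ω, ENNReal.ofReal (pathWeight ω n x) ∂(P.map Prod.fst) := by
  simpa using measure_inter_cyl hP n x MeasurableSet.univ

lemma ae_start (hP : IsRWRE μ P) : ∀ᵐ q ∂P, q.2 0 = 0 := by
  have h : ∀ᵐ q ∂P, ∀ x : Site d, x ≠ 0 → q ∉ cyl 0 (fun _ => x) := by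
    rw [ae_all_iff]
    intro x
    by_cases hx : x = 0
    · simp [hx]
    · have h0 : P (cyl 0 (fun _ => x)) = 0 := by
        rw [measure_cyl hP]; simp [hx]
      filter_upwards [measure_eq_zero_iff_ae_notMem.1 h0] with q hq _ using hq
  filter_upwards [h] with q hq
  by_contra hne
  exact hq _ hne (by intro k hk; obtain rfl := Nat.le_zero.1 hk; rfl)

/-- Almost surely every step of the walk is an edge of the graph `G(ω)`. -/
lemma ae_step_pos (hP : IsRWRE μ P) :
    ∀ᵐ q ∂P, ∀ k, 0 < (q.1 (q.2 k)).prob (q.2 (k + 1) - q.2 k) := by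
  have h : ∀ᵐ q ∂P, ∀ (n : ℕ) (y : Fin (n + 1) → Site d),
      q ∉ Prod.fst ⁻¹' {ω | pathWeight ω n (extPath n y) = 0} ∩ cyl n (extPath n y) := by
    rw [ae_all_iff]; intro n
    rw [ae_all_iff]; intro y
    rw [← measure_eq_zero_iff_ae_notMem]
    have hA : MeasurableSet {ω : EnvOmega d | pathWeight ω n (extPath n y) = 0} :=
      (measurable_pathWeight n _) (measurableSet_singleton 0)
    rw [measure_inter_cyl hP n _ hA, setLIntegral_congr_fun (g := fun _ => 0) hA]
    · simp
    · intro ω hω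
      have : pathWeight ω n (extPath n y) = 0 := hω
      simp [this]
  filter_upwards [h] with q hq k
  refine lt_of_le_of_ne ((q.1 _).nonneg _) fun h0 => ?_
  have hext : ∀ j ≤ k + 1, q.2 j = extPath (k + 1) (fun j => q.2 j) j := by
    intro j hj; rw [extPath_of_le _ hj]
  refine hq (k + 1) (fun j => q.2 j) ⟨?_, hext⟩
  refine Finset.prod_eq_zero (i := k) (by simp) ?_
  rw [← hext k (by omega), ← hext (k + 1) le_rfl, ← h0]

end

/-! ### Independence of the environment at distinct sites -/

section

variable {μ : Measure (EnvDist d)} {ν : Measure (EnvOmega d)}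

lemma measure_coord (h : IsIIDEnv μ ν) (x : Site d) {A : Set (EnvDist d)}
    (hA : MeasurableSet A) : ν ((fun ω => ω x) ⁻¹' A) = μ A := by
  have := h.2.2 {x} (fun _ => A) (by simpa using hA)
  simpa [preimage] using this

lemma iIndepFun_coord (h : IsIIDEnv μ ν) :
    iIndepFun (fun (x : Site d) (ω : EnvOmega d) => ω x) ν := by
  rw [iIndepFun_iff_measure_inter_preimage_eq_mul]
  intro S A hA
  have hS : (⋂ i ∈ S, (fun ω : EnvOmega d => ω i) ⁻¹' A i) = {ω | ∀ x ∈ S, ω x ∈ A x} := by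
    ext ω; simp
  rw [hS, h.2.2 S A hA]
  exact Finset.prod_congr rfl fun x hx => (measure_coord h x (hA x hx)).symm

/-- The weight of a path up to time `n` is independent of the environment on a finite set `T` of
sites that the path does not visit before time `n`. -/
lemma setLIntegral_pathWeight (h : IsIIDEnv μ ν) (n : ℕ) (x : ℕ → Site d) (T : Finset (Site d))
    (hT : ∀ k < n, x k ∉ T) (B : Site d → Set (EnvDist d)) (hB : ∀ z, MeasurableSet (B z)) :
    ∫⁻ ω in {ω | ∀ z ∈ T, ω z ∈ B z}, ENNReal.ofReal (pathWeight ω n x) ∂ν =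
      (∏ z ∈ T, μ (B z)) * ∫⁻ ω, ENNReal.ofReal (pathWeight ω n x) ∂ν := by
  set S : Finset (Site d) := (Finset.range n).image x with hS
  have hdis : Disjoint T S := by
    rw [Finset.disjoint_right]
    intro z hz
    obtain ⟨k, hk, rfl⟩ := Finset.mem_image.1 hz
    exact hT k (Finset.mem_range.1 hk)
  have hmem : ∀ k : Fin n, x k ∈ S := fun k =>
    Finset.mem_image_of_mem _ (Finset.mem_range.2 k.2)
  have hind := (iIndepFun_coord h).indepFun_finset T S hdis (fun i => measurable_pi_apply i)
  set A : Set (EnvOmega d) := {ω | ∀ z ∈ T, ω z ∈ B z} with hA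
  have hBm : MeasurableSet {η : T → EnvDist d | ∀ z : T, η z ∈ B z} := by
    have : {η : T → EnvDist d | ∀ z : T, η z ∈ B z} = ⋂ z : T, (fun η => η z) ⁻¹' B z := by
      ext η; simp
    rw [this]
    exact MeasurableSet.iInter fun z => measurable_pi_apply z (hB z)
  have hAm : MeasurableSet A := by
    have : A = (fun (ω : EnvOmega d) (z : T) => ω z) ⁻¹' {η : T → EnvDist d | ∀ z : T, η z ∈ B z} := by
      ext ω; simp [hA]
    rw [this]
    exact (measurable_pi_lambda _ fun z => measurable_pi_apply _) hBm
  have hg1 : Measurable (({η : T → EnvDist d | ∀ z : T, η z ∈ B z}).indicator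
      (fun _ => (1 : ℝ≥0∞))) := measurable_const.indicator hBm
  have hg2 : Measurable (fun η : S → EnvDist d =>
      ENNReal.ofReal (∏ k : Fin n, (η ⟨x k, hmem k⟩).prob (x (k + 1) - x k))) := by
    refine ENNReal.measurable_ofReal.comp (Finset.measurable_prod _ fun k _ => ?_)
    exact (measurable_prob _).comp (measurable_pi_apply _)
  have hind2 := hind.comp hg1 hg2
  have e1 : (({η : T → EnvDist d | ∀ z : T, η z ∈ B z}).indicator (fun _ => (1 : ℝ≥0∞))) ∘
      (fun (ω : EnvOmega d) (z : T) => ω z) = A.indicator 1 := by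
    ext ω
    simp [hA, indicator]
  have e2 : (fun η : S → EnvDist d =>
      ENNReal.ofReal (∏ k : Fin n, (η ⟨x k, hmem k⟩).prob (x (k + 1) - x k))) ∘
      (fun (ω : EnvOmega d) (z : S) => ω z) = fun ω => ENNReal.ofReal (pathWeight ω n x) := by
    ext ω
    simp only [Function.comp, pathWeight]
    rw [Finset.prod_range]
  rw [e1, e2] at hind2
  have hmul := lintegral_mul_eq_lintegral_mul_lintegral_of_indepFun
    (measurable_one.indicator hAm) (measurable_pathWeight n x).ennreal_ofReal hind2
  rw [lintegral_indicator_one hAm] at hmul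
  rw [← h.2.2 T B (fun z _ => hB z), ← hmul, ← lintegral_indicator hAm]
  refine lintegral_congr fun ω => ?_
  by_cases hω : ω ∈ A <;> simp [hω]

end

/-! ### Leaving every finite set -/

/-- The quenched probability that the walk started at `x` stays in `F` at times `0, …, n`, defined
by the one-step recursion. -/
noncomputable def stay (F : Finset (Site d)) (ω : EnvOmega d) : ℕ → Site d → ℝ
  | 0, x => if x ∈ F then 1 else 0
  | n + 1, x =>
    if x ∈ F then ∑ i, (ω x).prob (stepVec d i) * stay F ω n (x + stepVec d i) else 0

lemma stay_of_notMem (F : Finset (Site d)) (ω : EnvOmega d) (n : ℕ) {x : Site d} (hx : x ∉ F) :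
    stay F ω n x = 0 := by
  cases n <;> simp [stay, hx]

lemma stay_nonneg (F : Finset (Site d)) (ω : EnvOmega d) (n : ℕ) :
    ∀ x, 0 ≤ stay F ω n x := by
  induction n with
  | zero => intro x; simp only [stay]; split_ifs <;> norm_num
  | succ n ih =>
    intro x; simp only [stay]; split_ifs
    · exact Finset.sum_nonneg fun i _ => mul_nonneg ((ω x).nonneg _) (ih _)
    · exact le_rfl

lemma stay_le_one (F : Finset (Site d)) (ω : EnvOmega d) (n : ℕ) :
    ∀ x, stay F ω n x ≤ 1 := by
  induction n with
  | zero => intro x; simp only [stay]; split_ifs <;> norm_num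
  | succ n ih =>
    intro x; simp only [stay]; split_ifs
    · rw [← (ω x).total]
      exact Finset.sum_le_sum fun i _ => mul_le_of_le_one_right ((ω x).nonneg _) (ih _)
    · exact zero_le_one

lemma stay_succ_le (F : Finset (Site d)) (ω : EnvOmega d) (n : ℕ) :
    ∀ x, stay F ω (n + 1) x ≤ stay F ω n x := by
  induction n with
  | zero =>
    intro x
    by_cases hx : x ∈ F
    · simpa [stay, hx] using stay_le_one F ω 1 x
    · simp [stay_of_notMem F ω _ hx]
  | succ n ih =>
    intro x
    by_cases hx : x ∈ F
    · rw [stay, stay]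
      simp only [hx, if_true]
      exact Finset.sum_le_sum fun i _ => mul_le_mul_of_nonneg_left (ih _) ((ω x).nonneg _)
    · simp [stay_of_notMem F ω _ hx]

lemma measurable_stay (F : Finset (Site d)) (n : ℕ) :
    ∀ x, Measurable fun ω : EnvOmega d => stay F ω n x := by
  induction n with
  | zero => intro x; exact measurable_const
  | succ n ih =>
    intro x
    by_cases hx : x ∈ F
    · simp only [stay, hx, if_true]
      exact Finset.measurable_sum _ fun i _ => (measurable_envProb _ _).mul (ih _)
    · simp only [stay, hx, if_false]
      exact measurable_const

/-- If from every site some possible step increases `φ`, then the walk cannot stay in a finite set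
forever. The decreasing limit of `stay` is harmonic on `F` and vanishes off `F`, so this is a
maximum principle, applied at the maximiser with the largest value of `φ`. -/
lemma tendsto_stay (F : Finset (Site d)) (ω : EnvOmega d) (φ : Site d → ℤ)
    (hφ : ∀ x, ∃ i, 0 < (ω x).prob (stepVec d i) ∧ φ x < φ (x + stepVec d i)) (x : Site d) :
    Tendsto (fun n => stay F ω n x) atTop (𝓝 0) := by
  have hlim : ∀ x, ∃ l, Tendsto (fun n => stay F ω n x) atTop (𝓝 l) := fun x =>
    ⟨_, tendsto_atTop_ciInf (antitone_nat_of_succ_le fun n => stay_succ_le F ω n x)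
      ⟨0, by rintro _ ⟨n, rfl⟩; exact stay_nonneg F ω n x⟩⟩
  choose L hL using hlim
  have hL0 : ∀ x, 0 ≤ L x := fun x => ge_of_tendsto' (hL x) fun n => stay_nonneg F ω n x
  have hLout : ∀ x, x ∉ F → L x = 0 := by
    intro x hx
    have := hL x
    simp only [stay_of_notMem F ω _ hx] at this
    exact tendsto_nhds_unique this tendsto_const_nhds
  have hLrec : ∀ x ∈ F, L x = ∑ i, (ω x).prob (stepVec d i) * L (x + stepVec d i) := by
    intro x hx
    have h1 : Tendsto (fun n => stay F ω (n + 1) x) atTop (𝓝 (L x)) :=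
      (hL x).comp (tendsto_add_atTop_nat 1)
    refine tendsto_nhds_unique h1 ?_
    simp only [stay, hx, if_true]
    exact tendsto_finsetSum _ fun i _ => (hL _).const_mul _
  suffices h : ∀ x, L x = 0 by simpa [h x] using hL x
  by_contra! hne
  obtain ⟨y, hy⟩ := hne
  have hyF : y ∈ F := by by_contra h; exact hy (hLout y h)
  obtain ⟨a, haF, ha⟩ := F.exists_max_image L ⟨y, hyF⟩
  have hapos : 0 < L a := lt_of_lt_of_le (lt_of_le_of_ne (hL0 y) (Ne.symm hy)) (ha y hyF)
  have hmax : ∀ z, L z ≤ L a := fun z => by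
    by_cases hz : z ∈ F
    · exact ha z hz
    · rw [hLout z hz]; exact hapos.le
  obtain ⟨b, hbS, hb⟩ := (F.filter fun z => L z = L a).exists_max_image φ ⟨a, by simp [haF]⟩
  obtain ⟨hbF, hbL⟩ := Finset.mem_filter.1 hbS
  obtain ⟨i, hi, hφi⟩ := hφ b
  have hlt : L (b + stepVec d i) < L a := by
    refine lt_of_le_of_ne (hmax _) fun heq => ?_
    have hF : b + stepVec d i ∈ F := by
      by_contra h; rw [hLout _ h] at heq; exact hapos.ne heq
    exact absurd (hb _ (Finset.mem_filter.2 ⟨hF, heq⟩)) (not_le.2 hφi)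
  have hsum : ∑ j, (ω b).prob (stepVec d j) * L (b + stepVec d j)
      < ∑ j, (ω b).prob (stepVec d j) * L a :=
    Finset.sum_lt_sum (fun j _ => mul_le_mul_of_nonneg_left (hmax _) ((ω b).nonneg _))
      ⟨i, Finset.mem_univ _, mul_lt_mul_of_pos_left hlt hi⟩
  rw [← hLrec b hbF, ← Finset.sum_mul, (ω b).total, one_mul, hbL] at hsum
  exact lt_irrefl _ hsum

lemma pathWeight_update (ω : EnvOmega d) (m : ℕ) (x : ℕ → Site d) (v : Site d) :
    pathWeight ω (m + 1) (Function.update x (m + 1) (x m + v)) =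
      pathWeight ω m x * (ω (x m)).prob v := by
  unfold pathWeight
  rw [Finset.prod_range_succ]
  congr 1
  · refine Finset.prod_congr rfl fun k hk => ?_
    have := Finset.mem_range.1 hk
    rw [Function.update_of_ne (by omega), Function.update_of_ne (by omega)]
  · rw [Function.update_of_ne (by omega), Function.update_self, add_sub_cancel_left]

section

variable {μ : Measure (EnvDist d)} {P : Measure (RWSpace d)}

lemma ae_exists_step (hP : IsRWRE μ P) :
    ∀ᵐ q ∂P, ∀ k, ∃ i, q.2 (k + 1) = q.2 k + stepVec d i := by
  filter_upwards [ae_step_pos hP] with q hq k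
  obtain ⟨i, hi⟩ := (q.1 (q.2 k)).support _ (hq k).ne'
  exact ⟨i, by rw [← hi]; abel⟩

/-- The Markov property of the quenched walk at time `m`, for the event of staying in `F`. -/
lemma measure_cyl_stay_le (hP : IsRWRE μ P) (F : Finset (Site d)) (n : ℕ) :
    ∀ (m : ℕ) (x : ℕ → Site d), P (cyl m x ∩ {q | ∀ k ≤ n, q.2 (m + k) ∈ F}) ≤
      ∫⁻ ω, ENNReal.ofReal (pathWeight ω m x * stay F ω n (x m)) ∂(P.map Prod.fst) := by
  have hempty : ∀ (n m : ℕ) (x : ℕ → Site d), x m ∉ F →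
      cyl m x ∩ {q : RWSpace d | ∀ k ≤ n, q.2 (m + k) ∈ F} = ∅ := by
    intro n m x hx
    rw [eq_empty_iff_forall_notMem]
    rintro q ⟨h1, h2⟩
    have := h2 0 (Nat.zero_le _)
    rw [add_zero, h1 m le_rfl] at this
    exact hx this
  induction n with
  | zero =>
    intro m x
    by_cases hx : x m ∈ F
    · refine (measure_mono inter_subset_left).trans ?_
      rw [measure_cyl hP]
      simp only [stay, hx, if_true, mul_one]
      split_ifs <;> simp
    · rw [hempty _ _ _ hx]; simp
  | succ n ih =>
    intro m x
    by_cases hx : x m ∈ F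
    · set y : Fin d × Bool → ℕ → Site d :=
        fun i => Function.update x (m + 1) (x m + stepVec d i) with hy
      have hsub : (cyl m x ∩ {q | ∀ k ≤ n + 1, q.2 (m + k) ∈ F} : Set (RWSpace d)) ≤ᵐ[P]
          (⋃ i, cyl (m + 1) (y i) ∩ {q | ∀ k ≤ n, q.2 (m + 1 + k) ∈ F} : Set (RWSpace d)) := by
        filter_upwards [ae_exists_step hP] with q hq hmem
        obtain ⟨h1, h2⟩ := hmem
        obtain ⟨i, hi⟩ := hq m
        refine mem_iUnion.2 ⟨i, fun k hk => ?_, fun k hk => ?_⟩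
        · rcases Nat.lt_or_ge m k with h | h
          · obtain rfl : k = m + 1 := by omega
            simp only [hy, Function.update_self]
            rw [hi, h1 m le_rfl]
          · simp only [hy]
            rw [Function.update_of_ne (by omega)]
            exact h1 k h
        · have := h2 (k + 1) (by omega)
          rwa [show m + 1 + k = m + (k + 1) by ring]
      refine (measure_mono_ae hsub).trans ((measure_iUnion_fintype_le _ _).trans ?_)
      refine (Finset.sum_le_sum fun i _ => ih (m + 1) (y i)).trans ?_
      have hmeas : ∀ i, Measurable fun ω : EnvOmega d =>
          ENNReal.ofReal (pathWeight ω (m + 1) (y i) * stay F ω n (y i (m + 1))) := fun i =>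
        ((measurable_pathWeight _ _).mul (measurable_stay F n _)).ennreal_ofReal
      rw [← lintegral_finsetSum _ fun i _ => hmeas i]
      refine lintegral_mono fun ω => ?_
      rw [← ENNReal.ofReal_sum_of_nonneg fun i _ =>
        mul_nonneg (pathWeight_nonneg _ _ _) (stay_nonneg _ _ _ _)]
      refine ENNReal.ofReal_le_ofReal (le_of_eq ?_)
      simp only [stay, hx, if_true, Finset.mul_sum]
      refine Finset.sum_congr rfl fun i _ => ?_
      simp only [hy, pathWeight_update, Function.update_self, mul_assoc]
    · rw [hempty _ _ _ hx]; simp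

/-- If almost every environment has, from every site, a possible step increasing `φ`, then almost
surely the walk visits infinitely many sites. -/
lemma ae_infinite_range (hP : IsRWRE μ P) (φ : Site d → ℤ)
    (hφ : ∀ᵐ ω ∂(P.map Prod.fst), ∀ x, ∃ i, 0 < (ω x).prob (stepVec d i) ∧
      φ x < φ (x + stepVec d i)) :
    ∀ᵐ q ∂P, (range q.2).Infinite := by
  have : IsProbabilityMeasure (P.map Prod.fst) := hP.2.1.2.1
  have hF : ∀ F : Finset (Site d), P {q | ∀ k, q.2 k ∈ F} = 0 := by
    intro F
    have hle : ∀ n, P {q | ∀ k, q.2 k ∈ F} ≤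
        ∫⁻ ω, ENNReal.ofReal (stay F ω n 0) ∂(P.map Prod.fst) := by
      intro n
      have h := measure_cyl_stay_le hP F n 0 (fun _ => 0)
      simp only [pathWeight, Finset.range_zero, Finset.prod_empty, one_mul] at h
      refine (measure_mono_ae ?_).trans h
      filter_upwards [ae_start hP] with q hq hmem
      refine ⟨fun k hk => ?_, fun k _ => hmem _⟩
      obtain rfl := Nat.le_zero.1 hk
      exact hq
    have hlim : Tendsto (fun n => ∫⁻ ω, ENNReal.ofReal (stay F ω n 0) ∂(P.map Prod.fst))
        atTop (𝓝 (∫⁻ _, 0 ∂(P.map Prod.fst))) := by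
      refine tendsto_lintegral_of_dominated_convergence (fun _ => 1)
        (fun n => (measurable_stay F n 0).ennreal_ofReal) (fun n => ?_) (by simp) ?_
      · exact Eventually.of_forall fun ω => ENNReal.ofReal_le_one.2 (stay_le_one _ _ _ _)
      · filter_upwards [hφ] with ω hω
        simpa using ENNReal.tendsto_ofReal (tendsto_stay F ω φ hω 0)
    rw [lintegral_zero] at hlim
    exact le_antisymm (ge_of_tendsto' hlim hle) zero_le
  have hall : ∀ᵐ q ∂P, ∀ F : Finset (Site d), ¬ ∀ k, q.2 k ∈ F := by
    rw [ae_all_iff]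
    exact fun F => measure_eq_zero_iff_ae_notMem.1 (hF F)
  filter_upwards [hall] with q hq hfin
  exact hq hfin.toFinset fun k => hfin.mem_toFinset.2 (mem_range_self k)

/-- An orthogonal set `V` as in the theorem provides such a `φ`, namely `x ↦ ∑_{u ∈ V} u · x`. -/
lemma ae_infinite_of_orthogonal (hP : IsRWRE μ P) (V : Set (Site d))
    (hV : ∀ v ∈ V, ∃ i, v = stepVec d i)
    (hO : ∀ u ∈ V, ∀ v ∈ V, u ≠ v → dotZ u v = 0)
    (h1 : μ {γ : EnvDist d | ∃ v ∈ V, 0 < γ.prob v} = 1) :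
    ∀ᵐ q ∂P, (range q.2).Infinite := by
  have : IsProbabilityMeasure μ := hP.2.1.1
  have hfin : V.Finite := (finite_range (stepVec d)).subset fun v hv => by
    obtain ⟨i, rfl⟩ := hV v hv; exact mem_range_self i
  have hmeas : MeasurableSet {γ : EnvDist d | ∃ v ∈ V, 0 < γ.prob v} := by
    have : {γ : EnvDist d | ∃ v ∈ V, 0 < γ.prob v} = ⋃ v ∈ V, {γ | 0 < γ.prob v} := by
      ext γ; simp
    rw [this]
    exact hfin.measurableSet_biUnion fun v _ =>
      measurableSet_lt measurable_const (measurable_prob v)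
  have hself : ∀ i, dotZ (stepVec d i) (stepVec d i) = 1 := by
    rintro ⟨i, c⟩
    cases c <;> simp [dotZ, stepVec, Pi.single_apply]
  have hadd : ∀ u x y : Site d, dotZ u (x + y) = dotZ u x + dotZ u y := by
    intro u x y; simp [dotZ, mul_add, Finset.sum_add_distrib]
  refine ae_infinite_range hP (fun x => ∑ u ∈ hfin.toFinset, dotZ u x) ?_
  rw [ae_all_iff]
  intro x
  have hx : ∀ᵐ ω ∂(P.map Prod.fst), ω x ∈ {γ : EnvDist d | ∃ v ∈ V, 0 < γ.prob v} := by
    have : IsProbabilityMeasure (P.map Prod.fst) := hP.2.1.2.1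
    rw [← prob_compl_eq_zero_iff hmeas] at h1
    rw [← measure_coord hP.2.1 x hmeas.compl] at h1
    filter_upwards [measure_eq_zero_iff_ae_notMem.1 h1] with ω hω
    simpa using hω
  filter_upwards [hx] with ω hω
  obtain ⟨v, hv, hpos⟩ := hω
  obtain ⟨i, rfl⟩ := hV v hv
  refine ⟨i, hpos, ?_⟩
  simp only [hadd, Finset.sum_add_distrib]
  rw [Finset.sum_eq_single_of_mem (f := fun u => dotZ u (stepVec d i)) _ (hfin.mem_toFinset.2 hv)
    fun u hu hne => hO u (hfin.mem_toFinset.1 hu) _ hv hne, hself]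
  exact lt_add_one _

end

/-! ### Traps on unit cubes -/

/-- The corner of the unit cube `z + {0,1}^d` in position `b`. -/
def corner (z : Site d) (b : Fin d → Bool) : Site d := fun j => z j + if b j = true then 1 else 0

/-- Environment values forbidding all the steps that leave a unit cube from the corner in
position `b`. -/
def blocked (b : Fin d → Bool) : Set (EnvDist d) := {γ | ∀ i, γ.prob (stepVec d (i, b i)) = 0}

/-- Environments in which the walk cannot leave the cube `z + {0,1}^d`. -/
def trap (z : Site d) : Set (EnvOmega d) := {ω | ∀ b, ω (corner z b) ∈ blocked b}

lemma measurableSet_blocked (b : Fin d → Bool) : MeasurableSet (blocked b) := by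
  have : blocked b = ⋂ i, (fun γ : EnvDist d => γ.prob (stepVec d (i, b i))) ⁻¹' {0} := by
    ext γ; simp [blocked]
  rw [this]
  exact MeasurableSet.iInter fun i => measurable_prob _ (measurableSet_singleton 0)

lemma measurableSet_trap (z : Site d) : MeasurableSet (trap z) := by
  have : trap z = ⋂ b, (fun ω : EnvOmega d => ω (corner z b)) ⁻¹' blocked b := by
    ext γ; simp [trap]
  rw [this]
  exact MeasurableSet.iInter fun b => measurable_pi_apply _ (measurableSet_blocked b)

lemma decide_corner (z : Site d) (b : Fin d → Bool) :
    (fun j => decide (corner z b j = z j + 1)) = b := by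
  ext j
  cases h : b j <;> simp [corner, h]

lemma corner_injective (z : Site d) : Function.Injective (corner z) := fun b b' h => by
  rw [← decide_corner z b, h, decide_corner]

lemma exists_corner_of_step {ω : EnvOmega d} {z : Site d} (hω : ω ∈ trap z) (b : Fin d → Bool)
    {y : Site d} (h : 0 < (ω (corner z b)).prob (y - corner z b)) : ∃ b', y = corner z b' := by
  obtain ⟨⟨i, c⟩, hi⟩ := (ω (corner z b)).support _ h.ne'
  have hc : c ≠ b i := by
    rintro rfl
    rw [hi, hω b i] at h
    exact lt_irrefl _ h
  refine ⟨Function.update b i c, ?_⟩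
  rw [sub_eq_iff_eq_add] at hi
  rw [hi, add_comm]
  ext j
  by_cases hj : j = i
  · subst hj
    cases hb : b j <;> cases c <;> simp_all [corner, stepVec]
  · cases c <;> simp [corner, stepVec, hj]

/-- The box `[-2N, 2N]^d`. -/
def box (d N : ℕ) : Set (Site d) := {x | ∀ j, |x j| ≤ 2 * (N : ℤ)}

lemma finite_box (d N : ℕ) : (box d N).Finite := by
  refine (finite_Icc (fun _ => -(2 * (N : ℤ)) : Site d) (fun _ => 2 * (N : ℤ))).subset ?_
  intro x hx
  exact ⟨fun j => (abs_le.1 (hx j)).1, fun j => (abs_le.1 (hx j)).2⟩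

lemma box_subset_succ (N : ℕ) : box d N ⊆ box d (N + 1) := fun x hx j => by
  have := hx j
  push_cast
  omega

/-- The event that the walk leaves `[-2N, 2N]^d`. -/
def esc (d N : ℕ) : Set (RWSpace d) := {q | ∃ k, q.2 k ∉ box d N}

lemma esc_succ_subset (N : ℕ) : esc d (N + 1) ⊆ esc d N := fun _ ⟨k, hk⟩ =>
  ⟨k, fun h => hk (box_subset_succ N h)⟩

/-- The base point of a unit cube that has `x` as a corner and points away from the origin. -/
def outBase (x : Site d) : Site d := fun j => if 0 ≤ x j then x j else x j - 1

lemma exists_corner_outBase (x : Site d) : ∃ b, x = corner (outBase x) b := by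
  refine ⟨fun j => decide (x j < 0), ?_⟩
  ext j
  by_cases h : 0 ≤ x j
  · simp [corner, outBase, h]
  · simp [corner, outBase, h, not_le.1 h]

lemma le_abs_corner_outBase (x : Site d) (b : Fin d → Bool) (j : Fin d) :
    |x j| ≤ |corner (outBase x) b j| := by
  simp only [corner, outBase]
  simp only [abs_eq_max_neg]
  split_ifs <;> omega

lemma abs_corner_outBase_le (x : Site d) (b : Fin d → Bool) (j : Fin d) :
    |corner (outBase x) b j| ≤ |x j| + 1 := by
  simp only [corner, outBase]
  simp only [abs_eq_max_neg]
  split_ifs <;> omega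

lemma corner_outBase_notMem_box {x : Site d} {N : ℕ} (hx : x ∉ box d N) (b : Fin d → Bool) :
    corner (outBase x) b ∉ box d N := fun h =>
  hx fun j => (le_abs_corner_outBase x b j).trans (h j)

lemma abs_stepVec_le (i : Fin d × Bool) (j : Fin d) : |stepVec d i j| ≤ 1 := by
  obtain ⟨i, c⟩ := i
  by_cases h : j = i
  · subst h; cases c <;> simp [stepVec]
  · cases c <;> simp [stepVec, h]

section

variable {μ : Measure (EnvDist d)} {P : Measure (RWSpace d)}

/-- Given that the walk first leaves the box `[-2N, 2N]^d` along a given path, the unit cube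
pointing outwards from the exit site has not been seen before. It is a trap with the fixed
probability `∏ b, μ (blocked b)`, and then the walk never leaves `[-2(N+1), 2(N+1)]^d`. -/
lemma measure_cyl_esc_le (hP : IsRWRE μ P) (N n : ℕ) (x : ℕ → Site d)
    (hx : ∀ k < n, x k ∈ box d N) (hxn : x n ∉ box d N) :
    P (cyl n x ∩ esc d (N + 1)) ≤ (1 - ∏ b : Fin d → Bool, μ (blocked b)) * P (cyl n x) := by
  have := hP.1
  set z := outBase (x n) with hz
  have htrap : P (Prod.fst ⁻¹' trap z ∩ cyl n x) =
      (∏ b : Fin d → Bool, μ (blocked b)) * P (cyl n x) := by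
    set T : Finset (Site d) := Finset.univ.image (corner z) with hT
    set B : Site d → Set (EnvDist d) := fun y => blocked fun j => decide (y j = z j + 1) with hB
    have hset : trap z = {ω | ∀ y ∈ T, ω y ∈ B y} := by
      ext ω; simp [trap, hT, hB, decide_corner]
    have hprod : ∏ y ∈ T, μ (B y) = ∏ b : Fin d → Bool, μ (blocked b) := by
      rw [hT, Finset.prod_image fun b _ b' _ h => corner_injective z h]
      simp only [hB, decide_corner]
    have hdis : ∀ k < n, x k ∉ T := by
      intro k hk hmem
      obtain ⟨b, -, hb⟩ := Finset.mem_image.1 hmem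
      exact corner_outBase_notMem_box hxn b (hb ▸ hx k hk)
    rw [measure_inter_cyl hP n x (measurableSet_trap z), measure_cyl hP, hset,
      setLIntegral_pathWeight hP.2.1 n x T hdis B fun y => measurableSet_blocked _, hprod]
    ring
  have hsub : (cyl n x ∩ esc d (N + 1) : Set (RWSpace d)) ≤ᵐ[P]
      (cyl n x \ Prod.fst ⁻¹' trap z : Set (RWSpace d)) := by
    filter_upwards [ae_start hP, ae_step_pos hP, ae_exists_step hP] with q h0 hpos hstep hmem
    obtain ⟨hc, k, hk⟩ := hmem
    refine ⟨hc, fun htr => hk ?_⟩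
    have hbound : ∀ j, |x n j| ≤ 2 * (N : ℤ) + 1 := by
      intro j
      cases n with
      | zero =>
        rw [← hc 0 le_rfl, h0]
        simp only [Pi.zero_apply, abs_zero]
        positivity
      | succ m =>
        obtain ⟨i, hi⟩ := hstep m
        rw [← hc (m + 1) le_rfl, hi, hc m (Nat.le_succ m)]
        exact (abs_add_le _ _).trans (add_le_add (hx m (Nat.lt_succ_self m) j) (abs_stepVec_le i j))
    have hcube : ∀ k, ∃ b, q.2 (n + k) = corner z b := by
      intro k
      induction k with
      | zero =>
        rw [add_zero, hc n le_rfl]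
        exact exists_corner_outBase (x n)
      | succ k ih =>
        obtain ⟨b, hb⟩ := ih
        have := hpos (n + k)
        rw [hb] at this
        exact exists_corner_of_step htr b this
    rcases Nat.lt_or_ge k n with h | h
    · rw [hc k h.le]
      exact box_subset_succ N (hx k h)
    · obtain ⟨b, hb⟩ := hcube (k - n)
      rw [Nat.add_sub_cancel' h] at hb
      intro j
      rw [hb]
      have h1 := abs_corner_outBase_le (x n) b j
      have h2 := hbound j
      push_cast
      rw [← hz] at h1
      linarith
  refine (measure_mono_ae hsub).trans (le_of_eq ?_)
  have hadd := measure_inter_add_sdiff (μ := P) (cyl n x) (measurable_fst (measurableSet_trap z))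
  rw [inter_comm, htrap] at hadd
  rw [ENNReal.sub_mul fun _ _ => measure_ne_top _ _, one_mul]
  refine ENNReal.eq_sub_of_add_eq' (measure_ne_top _ _) ?_
  rw [add_comm]; exact hadd

/-- First exit paths from the box `[-2N, 2N]^d`. -/
def ExitPath (d N : ℕ) : Type :=
  {s : Σ n : ℕ, Fin (n + 1) → Site d //
    (∀ k < s.1, extPath s.1 s.2 k ∈ box d N) ∧ extPath s.1 s.2 s.1 ∉ box d N}

instance (d N : ℕ) : Countable (ExitPath d N) := by unfold ExitPath; infer_instance

/-- The cylinder event of a first exit path. -/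
def exitCyl {N : ℕ} (s : ExitPath d N) : Set (RWSpace d) := cyl s.1.1 (extPath s.1.1 s.1.2)

lemma iUnion_exitCyl (N : ℕ) : ⋃ s : ExitPath d N, exitCyl s = esc d N := by
  ext q
  constructor
  · intro h
    obtain ⟨s, hs⟩ := mem_iUnion.1 h
    refine ⟨s.1.1, ?_⟩
    rw [hs _ le_rfl]
    exact s.2.2
  · intro h
    have hext : ∀ j ≤ Nat.find h, q.2 j = extPath (Nat.find h) (fun j => q.2 j) j := by
      intro j hj; rw [extPath_of_le _ hj]
    refine mem_iUnion.2 ⟨⟨⟨Nat.find h, fun j => q.2 j⟩, fun k hk => ?_, ?_⟩, hext⟩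
    · rw [← hext k hk.le]
      exact not_not.1 (Nat.find_min h hk)
    · rw [← hext _ le_rfl]
      exact Nat.find_spec h

lemma pairwise_disjoint_exitCyl (N : ℕ) :
    Pairwise (Function.onFun Disjoint (exitCyl (d := d) (N := N))) := by
  rintro ⟨⟨n, y⟩, hy1, hy2⟩ ⟨⟨m, w⟩, hw1, hw2⟩ hne
  refine disjoint_left.2 fun q h1 h2 => hne ?_
  simp only [exitCyl] at h1 h2 hy1 hy2 hw1 hw2
  have hnm : n = m := by
    rcases lt_trichotomy n m with h | h | h
    · exact absurd (hw1 n h) (by rw [← h2 n h.le, h1 n le_rfl]; exact hy2)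
    · exact h
    · exact absurd (hy1 m h) (by rw [← h1 m h.le, h2 m le_rfl]; exact hw2)
  subst hnm
  have : y = w := by
    ext1 j
    have hj : (j : ℕ) ≤ n := Nat.lt_succ_iff.1 j.2
    have := (h1 j hj).symm.trans (h2 j hj)
    rwa [extPath_of_le _ hj, extPath_of_le _ hj] at this
  subst this
  rfl

lemma measure_esc_succ_le (hP : IsRWRE μ P) (N : ℕ) :
    P (esc d (N + 1)) ≤ (1 - ∏ b : Fin d → Bool, μ (blocked b)) * P (esc d N) := by
  calc P (esc d (N + 1)) ≤ P (⋃ s : ExitPath d N, exitCyl s ∩ esc d (N + 1)) := by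
        refine measure_mono fun q hq => ?_
        rw [← iUnion_inter, iUnion_exitCyl]
        exact ⟨esc_succ_subset N hq, hq⟩
    _ ≤ ∑' s : ExitPath d N, P (exitCyl s ∩ esc d (N + 1)) := measure_iUnion_le _
    _ ≤ ∑' s : ExitPath d N, (1 - ∏ b : Fin d → Bool, μ (blocked b)) * P (exitCyl s) :=
        ENNReal.tsum_le_tsum fun s => measure_cyl_esc_le hP N _ _ s.2.1 s.2.2
    _ = (1 - ∏ b : Fin d → Bool, μ (blocked b)) * P (esc d N) := by
        rw [ENNReal.tsum_mul_left, ← iUnion_exitCyl,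
          measure_iUnion (pairwise_disjoint_exitCyl N) fun s => measurableSet_cyl _ _]

lemma ae_finite_range (hP : IsRWRE μ P) (hpos : ∀ b : Fin d → Bool, μ (blocked b) ≠ 0) :
    ∀ᵐ q ∂P, (range q.2).Finite := by
  have := hP.1
  have hr : 1 - ∏ b : Fin d → Bool, μ (blocked b) < 1 :=
    ENNReal.sub_lt_self ENNReal.one_ne_top one_ne_zero (Finset.prod_ne_zero_iff.2 fun b _ => hpos b)
  have hpow : ∀ N, P (esc d N) ≤ (1 - ∏ b : Fin d → Bool, μ (blocked b)) ^ N := by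
    intro N
    induction N with
    | zero => simpa using MeasureTheory.prob_le_one (μ := P)
    | succ N ih =>
      rw [pow_succ']
      exact (measure_esc_succ_le hP N).trans (by gcongr)
  have hzero : P (⋂ N, esc d N) = 0 :=
    le_antisymm (ge_of_tendsto' (ENNReal.tendsto_pow_atTop_nhds_zero_of_lt_one hr) fun N =>
      (measure_mono (iInter_subset _ N)).trans (hpow N)) zero_le
  filter_upwards [measure_eq_zero_iff_ae_notMem.1 hzero] with q hq
  obtain ⟨N, hN⟩ : ∃ N, q ∉ esc d N := by simpa using hq
  refine (finite_box d N).subset ?_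
  rintro _ ⟨k, rfl⟩
  by_contra h
  exact hN ⟨k, h⟩

/-- The outward steps at the corner `b` form an orthogonal set, so in the absence of a set as in
the theorem all of them are forbidden with positive probability. -/
lemma measure_blocked_ne_zero [IsProbabilityMeasure μ] (hd : 0 < d)
    (h : ¬ ∃ V : Set (Site d), V.Nonempty ∧ (∀ v ∈ V, ∃ i, v = stepVec d i) ∧
        (∀ u ∈ V, ∀ v ∈ V, u ≠ v → dotZ u v = 0) ∧
        μ {γ : EnvDist d | ∃ v ∈ V, 0 < γ.prob v} = 1) (b : Fin d → Bool) :
    μ (blocked b) ≠ 0 := by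
  intro h0
  refine h ⟨range fun i => stepVec d (i, b i), ⟨_, mem_range_self ⟨0, hd⟩⟩, ?_, ?_, ?_⟩
  · rintro _ ⟨i, rfl⟩; exact ⟨_, rfl⟩
  · rintro _ ⟨i, rfl⟩ _ ⟨j, rfl⟩ hne
    have hij : i ≠ j := by rintro rfl; exact hne rfl
    refine Finset.sum_eq_zero fun k _ => ?_
    by_cases hk : k = i
    · have : k ≠ j := by rintro rfl; exact hij hk.symm
      cases h : b j <;> simp [stepVec, h, this]
    · cases h : b i <;> simp [stepVec, h, hk]
  · have hset : {γ : EnvDist d | ∃ v ∈ range fun i => stepVec d (i, b i), 0 < γ.prob v} =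
        (blocked b)ᶜ := by
      ext γ
      simp [blocked, (γ.nonneg _).lt_iff_ne']
    rw [hset, prob_compl_eq_one_iff (measurableSet_blocked b), h0]

end

end RWREFinite

/-- If there exists a nonempty orthogonal set `V ⊆ E` with
`μ(G_o ∩ V ≠ ∅) = 1` then the walk visits infinitely many sites `P`-a.s.; otherwise the
walk visits only finitely many sites `P`-a.s. -/
theorem stmt0 {d : ℕ} (hd : 2 ≤ d) (μ : Measure (EnvDist d))
    (P : Measure (RWSpace d)) (hP : IsRWRE μ P) :
    ((∃ V : Set (Site d), V.Nonempty ∧ (∀ v ∈ V, ∃ i, v = stepVec d i) ∧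
        (∀ u ∈ V, ∀ v ∈ V, u ≠ v → dotZ u v = 0) ∧
        μ {γ : EnvDist d | ∃ v ∈ V, 0 < γ.prob v} = 1) →
      P {q : RWSpace d | (Set.range q.2).Infinite} = 1) ∧
    ((¬ ∃ V : Set (Site d), V.Nonempty ∧ (∀ v ∈ V, ∃ i, v = stepVec d i) ∧
        (∀ u ∈ V, ∀ v ∈ V, u ≠ v → dotZ u v = 0) ∧
        μ {γ : EnvDist d | ∃ v ∈ V, 0 < γ.prob v} = 1) →
      P {q : RWSpace d | (Set.range q.2).Finite} = 1) := by
  have := hP.1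
  have := hP.2.1.1
  have hone : ∀ s : Set (RWSpace d), (∀ᵐ q ∂P, q ∈ s) → P s = 1 := fun s hs => by
    rw [measure_congr (eventuallyEq_univ (s := s) |>.2 hs), measure_univ]
  refine ⟨?_, fun h => ?_⟩
  · rintro ⟨V, -, hV, hO, h1⟩
    exact hone _ (RWREFinite.ae_infinite_of_orthogonal hP V hV hO h1)
  · exact hone _ (RWREFinite.ae_finite_range hP
      (RWREFinite.measure_blocked_ne_zero (by omega) h))
end

section
/- For the random walk in an i.i.d. random environment on Z^d (d ≥ 2) and any ℓ ∈ R^d \ {0}, the annealed probability P(A_+(ℓ) ∪ A_-(ℓ)) is either 0 or 1. -/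
/-!
The proof uses no ellipticity. Write `φ x = x · ℓ` for the level of a site, and call `n` a record
time if the level at time `n` strictly exceeds all earlier levels. At a record time the half-space of
levels at least the current one is unexplored, so the conditional probability that the future
satisfies an event living in that half-space is the annealed probability `p` of that event. By Lévy's
upward theorem, if `p > 0` and there are infinitely many records, then almost surely the event
occurs after infinitely many of them (`IsAnnealed.ae_frequently`). This is applied to three events.

* *A fixed first step `s` with `φ s > 0`.* Infinitely many records imply that the level is
  unbounded (`IsAnnealed.unbounded_of_records`). In particular, almost surely, the supremum of the
  levels is attained or infinite.
* *Never going below the starting level.* If this has positive probability, infinitely many records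
  imply transience upwards (`IsAnnealed.goesUp_of_records`). It does have positive probability as
  soon as the walk attains its minimal level with positive probability
  (`IsAnnealed.stay_ne_zero_of_min`): restart the walk at the time of the minimum.
* *Staying between levels `0` and `j` forever.* If this has positive probability, then a walk with
  infinitely many records almost surely gets trapped, so upward transience has probability zero.

Suppose, by symmetry, that `P(A_+) > 0`. A path in `A_+` attains its minimum, so almost surely
infinitely many records imply `A_+`. If the maximum is almost surely never attained, there are always
infinitely many records and `A_+` is almost sure. Otherwise the maximum is attained with positive
probability, and the second point for `-ℓ` shows that infinitely many records in direction `-ℓ` imply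
`A_-`. A path outside `A_+ ∪ A_-` then attains both its maximum and its minimum, so after the time of
the minimum it is confined to a bounded range of levels; by the third point this has probability
zero (`IsAnnealed.ae_transient`).

The argument only sees the law of the path and is carried out for laws `Q` on paths in a countable
abelian group that satisfy `IsAnnealed`; `IsRWRE.isAnnealed` derives these properties from the
i.i.d. environment.
-/

open MeasureTheory Filter Set Topology
open scoped Classical ENNReal

/-! ### Annealed path laws and cylinder events -/

section Core

set_option linter.unusedSectionVars false

variable {V : Type*} [AddCommGroup V] [Countable V] [MeasurableSpace V]
  [DiscreteMeasurableSpace V]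

/-- The cylinder of paths that agree with `x` up to and including time `n`. -/
def cyl (n : ℕ) (x : ℕ → V) : Set (ℕ → V) := {w | ∀ k ≤ n, w k = x k}

/-- The path of increments after time `n`: the walk from time `n` on, recentred at its position at
time `n`. -/
def incr (n : ℕ) (w : ℕ → V) : ℕ → V := fun k => w (n + k) - w n

/-- The properties of the annealed law of the walk that the zero-one law rests on. The path starts
at `0`; the increments after time `n` are independent of the first `n` steps along any path that
uses disjoint sets of environment sites before and after time `n` (the last site of a path is
visited but its environment is not used, whence `i < n` and `j < m`); and a continuation is never
more likely than the same path of increments started afresh. -/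
structure IsAnnealed (Q : Measure (ℕ → V)) : Prop where
  prob : IsProbabilityMeasure Q
  zero : ∀ᵐ w ∂Q, w 0 = 0
  indep : ∀ (n m : ℕ) (x : ℕ → V), (∀ i < n, ∀ j < m, x i ≠ x (n + j)) →
    Q (cyl (n + m) x) = Q (cyl n x) * Q (cyl m (incr n x))
  le_incr : ∀ (n m : ℕ) (x : ℕ → V), Q (cyl (n + m) x) ≤ Q (cyl m (incr n x))

/-- `n` is a strict record time: the level `φ` at time `n` exceeds all earlier levels. -/
def IsRecord (φ : V →+ ℝ) (n : ℕ) (w : ℕ → V) : Prop := ∀ i < n, φ (w i) < φ (w n)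

/-- Paths whose position at each time `k ≤ m` lies in `S k`. -/
def box (m : ℕ) (S : ℕ → Set V) : Set (ℕ → V) := {w | ∀ k ≤ m, w k ∈ S k}

lemma measurableSet_cyl (n : ℕ) (x : ℕ → V) : MeasurableSet (cyl n x) := by
  have : cyl n x = ⋂ k ≤ n, (fun w : ℕ → V => w k) ⁻¹' {x k} := by ext; simp [cyl]
  rw [this]
  exact MeasurableSet.iInter fun k => MeasurableSet.iInter fun _ =>
    measurable_pi_apply k (MeasurableSet.of_discrete)

lemma measurableSet_box (n : ℕ) (S : ℕ → Set V) : MeasurableSet (box n S) := by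
  have : box n S = ⋂ k ≤ n, (fun w : ℕ → V => w k) ⁻¹' (S k) := by ext; simp [box]
  rw [this]
  exact MeasurableSet.iInter fun k => MeasurableSet.iInter fun _ =>
    measurable_pi_apply k (MeasurableSet.of_discrete)

lemma measurable_incr (n : ℕ) : Measurable (incr n : (ℕ → V) → ℕ → V) := by
  refine measurable_pi_lambda _ fun k => ?_
  have h : Measurable (fun p : V × V => p.1 - p.2) := Measurable.of_discrete
  exact h.comp (f := fun w : ℕ → V => (w (n + k), w n))
    ((measurable_pi_apply (n + k)).prodMk (measurable_pi_apply n))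

/-- A comparison of two measures on cylinders of length `m` extends to `box m S`, which is a countable
disjoint union of such cylinders. -/
lemma measure_box_le (ρ Q : Measure (ℕ → V)) (c : ℝ≥0∞) (m : ℕ) (S : ℕ → Set V)
    (h : ∀ y : ℕ → V, (∀ k ≤ m, y k ∈ S k) → c * Q (cyl m y) ≤ ρ (cyl m y)) :
    c * Q (box m S) ≤ ρ (box m S) := by
  rcases isEmpty_or_nonempty V with hV | ⟨⟨v⟩⟩
  · have : IsEmpty (ℕ → V) := inferInstance
    simp [Set.eq_empty_of_isEmpty (box m S)]
  let π : (ℕ → V) → (Finset.Iic m → V) := fun w k => w k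
  have hπ : Measurable π := measurable_pi_lambda _ fun k => measurable_pi_apply _
  let T : Set (Finset.Iic m → V) := {y | ∀ k : Finset.Iic m, y k ∈ S k}
  have hT : MeasurableSet T := MeasurableSet.of_discrete
  have hbox : box m S = π ⁻¹' T := by
    ext w; simp [box, π, T]
  -- `ex` extends a finite path to all times; the values after time `m` are irrelevant.
  let ex : (Finset.Iic m → V) → ℕ → V := fun y k => if h : k ∈ Finset.Iic m then y ⟨k, h⟩ else v
  have hcyl : ∀ y, π ⁻¹' {y} = cyl m (ex y) := by
    intro y; ext w
    simp only [Set.mem_preimage, Set.mem_singleton_iff, funext_iff, cyl, Set.mem_ofPred_eq, π, ex]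
    constructor
    · intro H k hk
      rw [dif_pos (Finset.mem_Iic.2 hk)]; exact H ⟨k, Finset.mem_Iic.2 hk⟩
    · rintro H ⟨k, hk⟩
      have := H k (Finset.mem_Iic.1 hk)
      rwa [dif_pos hk] at this
  have hsum : ∀ κ : Measure (ℕ → V),
      κ (box m S) = ∑' y, T.indicator (fun y => κ (cyl m (ex y))) y := by
    intro κ
    rw [hbox, ← Measure.map_apply hπ hT, ← Measure.tsum_indicator_apply_singleton _ _ hT]
    refine tsum_congr fun y => ?_
    congr 1; ext y
    rw [Measure.map_apply hπ (MeasurableSet.singleton y), hcyl]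
  rw [hsum, hsum, ← ENNReal.tsum_mul_left]
  refine ENNReal.tsum_le_tsum fun y => ?_
  by_cases hy : y ∈ T
  · simp only [Set.indicator_of_mem hy]
    refine h _ fun k hk => ?_
    simp only [ex, dif_pos (Finset.mem_Iic.2 hk)]
    exact hy ⟨k, Finset.mem_Iic.2 hk⟩
  · simp [Set.indicator_of_notMem hy]

lemma cyl_inter_incr (n m : ℕ) (x y : ℕ → V) (hy : y 0 = 0) :
    cyl n x ∩ incr n ⁻¹' cyl m y = cyl (n + m) (fun k => if k ≤ n then x k else x n + y (k - n)) := by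
  ext w
  simp only [cyl, incr, Set.mem_inter_iff, Set.mem_preimage, Set.mem_ofPred_eq]
  constructor
  · rintro ⟨h1, h2⟩ k hk
    split_ifs with hkn
    · exact h1 k hkn
    · have := h2 (k - n) (by omega)
      rw [show n + (k - n) = k by omega, h1 n le_rfl] at this
      rw [← this]; abel
  · intro H
    have hn : w n = x n := by simpa using H n (by omega)
    refine ⟨fun k hk => by simpa [hk] using H k (by omega), fun k hk => ?_⟩
    rcases Nat.eq_zero_or_pos k with rfl | hk0
    · simp [hy]
    · have := H (n + k) (by omega)
      rw [if_neg (by omega), Nat.add_sub_cancel_left] at this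
      rw [this, hn]; abel

lemma cyl_inter_incr_of_ne (n m : ℕ) (x y : ℕ → V) (hy : y 0 ≠ 0) :
    cyl n x ∩ incr n ⁻¹' cyl m y = ∅ := by
  ext w
  simp only [Set.mem_inter_iff, Set.mem_preimage, Set.mem_empty_iff_false, iff_false, not_and]
  intro _ h
  have := h 0 (Nat.zero_le _)
  simp only [incr, add_zero, sub_self] at this
  exact hy this.symm

variable {Q : Measure (ℕ → V)}

lemma IsAnnealed.cyl_eq_zero (hQ : IsAnnealed Q) (m : ℕ) (y : ℕ → V) (hy : y 0 ≠ 0) :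
    Q (cyl m y) = 0 := by
  refine measure_mono_null (fun w hw => ?_) (ae_iff.1 hQ.zero)
  have := hw 0 (Nat.zero_le _)
  simpa [this] using hy

lemma cyl_congr {m : ℕ} {y z : ℕ → V} (h : ∀ k ≤ m, y k = z k) : cyl m y = cyl m z := by
  ext w
  exact forall₂_congr fun k hk => by rw [h k hk]

lemma incr_glue (n : ℕ) (x y : ℕ → V) (hy : y 0 = 0) :
    incr n (fun k => if k ≤ n then x k else x n + y (k - n)) = y := by
  funext k
  rcases Nat.eq_zero_or_pos k with rfl | hk
  · simp [incr, hy]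
  · simp [incr, show ¬ (n + k ≤ n) by omega]

/-- At a record time `n`, sites at level at least `φ (x n)` are unexplored, so a continuation that uses
only those sites is independent of the past. -/
lemma IsAnnealed.cyl_incr_indep (hQ : IsAnnealed Q) {φ : V →+ ℝ} {n : ℕ} {x : ℕ → V}
    (hx : IsRecord φ n x) {m : ℕ} {y : ℕ → V} (hy : ∀ k < m, 0 ≤ φ (y k)) :
    Q (cyl n x ∩ incr n ⁻¹' cyl m y) = Q (cyl n x) * Q (cyl m y) := by
  by_cases h0 : y 0 = 0
  · rw [cyl_inter_incr n m x y h0, hQ.indep n m, incr_glue n x y h0]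
    · congr 2
      exact cyl_congr fun k hk => by simp [hk]
    · intro i hi j hj
      have h1 : (if n + j ≤ n then x (n + j) else x n + y (n + j - n)) = x n + y j := by
        rcases Nat.eq_zero_or_pos j with rfl | hj0
        · simp [h0]
        · simp [show ¬ (n + j ≤ n) by omega]
      simp only [h1, if_pos hi.le]
      intro h
      have h2 := hx i hi
      rw [h, map_add] at h2
      linarith [hy j hj]
  · rw [hQ.cyl_eq_zero m y h0, mul_zero, cyl_inter_incr_of_ne n m x y h0, measure_empty]

lemma IsAnnealed.cyl_incr_le (hQ : IsAnnealed Q) (n : ℕ) (x : ℕ → V) (m : ℕ) (y : ℕ → V) :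
    Q (cyl n x ∩ incr n ⁻¹' cyl m y) ≤ Q (cyl m y) := by
  by_cases h0 : y 0 = 0
  · rw [cyl_inter_incr n m x y h0]
    refine (hQ.le_incr n m _).trans_eq ?_
    rw [incr_glue n x y h0]
  · simp [cyl_inter_incr_of_ne n m x y h0]

lemma map_restrict_incr (Q : Measure (ℕ → V)) (n : ℕ) (x : ℕ → V) {B : Set (ℕ → V)}
    (hB : MeasurableSet B) :
    ((Q.restrict (cyl n x)).map (incr n)) B = Q (cyl n x ∩ incr n ⁻¹' B) := by
  rw [Measure.map_apply (measurable_incr n) hB,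
    Measure.restrict_apply (measurable_incr n hB), Set.inter_comm]

/-- `IsAnnealed.cyl_incr_indep` for finite-horizon events. Only the inequality that is needed as
a lower bound for conditional probabilities is recorded. No constraint is imposed on `S m`, since
the environment at the last site is not used. -/
lemma IsAnnealed.box_indep (hQ : IsAnnealed Q) {φ : V →+ ℝ} {n : ℕ} {x : ℕ → V}
    (hx : IsRecord φ n x) {m : ℕ} {S : ℕ → Set V} (hS : ∀ k < m, ∀ v ∈ S k, 0 ≤ φ v) :
    Q (cyl n x) * Q (box m S) ≤ Q (cyl n x ∩ incr n ⁻¹' box m S) := by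
  rw [← map_restrict_incr _ _ _ (measurableSet_box m S)]
  refine measure_box_le _ _ _ _ _ fun y hy => ?_
  rw [map_restrict_incr _ _ _ (measurableSet_cyl m y), hQ.cyl_incr_indep hx fun k hk => hS k hk _ (hy k hk.le)]

lemma IsAnnealed.box_le (hQ : IsAnnealed Q) (n : ℕ) (x : ℕ → V) (m : ℕ) (S : ℕ → Set V) :
    Q (cyl n x ∩ incr n ⁻¹' box m S) ≤ Q (box m S) := by
  rw [← map_restrict_incr _ _ _ (measurableSet_box m S), ← one_mul (Measure.map _ _ _)]
  refine measure_box_le _ _ _ _ _ fun y hy => ?_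
  rw [map_restrict_incr _ _ _ (measurableSet_cyl m y), one_mul]
  exact hQ.cyl_incr_le n x m y

/-! ### Trials at record times -/

/-- Paths that remain in `T` forever. -/
def stay (T : Set V) : Set (ℕ → V) := {w | ∀ k, w k ∈ T}

lemma stay_eq_iInter (T : Set V) : stay T = ⋂ m, box m (fun _ => T) := by
  ext w
  simp only [stay, box, Set.mem_iInter, Set.mem_ofPred_eq]
  exact ⟨fun h m k _ => h k, fun h k => h k k le_rfl⟩

lemma measurableSet_stay (T : Set V) : MeasurableSet (stay T) := by
  rw [stay_eq_iInter]
  exact MeasurableSet.iInter fun m => measurableSet_box m _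

lemma antitone_box (T : Set V) : Antitone fun m => box m (fun _ : ℕ => T) :=
  fun _ _ hab _ hw k hk => hw k (hk.trans hab)

/-- At a record time, the conditional probability that the increments stay in a set `T` of
non-negative levels forever is at least the probability of `stay T`. -/
lemma IsAnnealed.stay_indep (hQ : IsAnnealed Q) {φ : V →+ ℝ} {n : ℕ} {x : ℕ → V}
    (hx : IsRecord φ n x) {T : Set V} (hT : ∀ v ∈ T, 0 ≤ φ v) :
    Q (cyl n x) * Q (stay T) ≤ Q (cyl n x ∩ incr n ⁻¹' stay T) := by
  have := hQ.prob
  have hlim : Tendsto (fun m => Q (cyl n x ∩ incr n ⁻¹' box m (fun _ => T))) atTop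
      (𝓝 (Q (⋂ m, cyl n x ∩ incr n ⁻¹' box m (fun _ => T)))) :=
    tendsto_measure_iInter_atTop
      (fun m => ((measurableSet_cyl n x).inter
        (measurable_incr n (measurableSet_box m _))).nullMeasurableSet)
      (fun a b hab => Set.inter_subset_inter_right _ (Set.preimage_mono (antitone_box T hab)))
      ⟨0, measure_ne_top _ _⟩
  rw [← Set.inter_iInter, ← Set.preimage_iInter, ← stay_eq_iInter] at hlim
  refine ge_of_tendsto' hlim fun m => ?_
  refine le_trans ?_ (hQ.box_indep hx (S := fun _ => T) fun k _ => hT)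
  gcongr
  rw [stay_eq_iInter]
  exact Set.iInter_subset _ m

/-- A set that is null inside every cylinder of length `n` is null: there are countably many of those. -/
lemma measure_zero_of_cyl {n : ℕ} {B : Set (ℕ → V)} (h : ∀ x, Q (cyl n x ∩ B) = 0) :
    Q B = 0 := by
  rcases isEmpty_or_nonempty (ℕ → V) with hV | ⟨⟨v⟩⟩
  · simp [Set.eq_empty_of_isEmpty B]
  let ex : (Finset.Iic n → V) → ℕ → V := fun y k => if h : k ∈ Finset.Iic n then y ⟨k, h⟩ else v k
  refine measure_mono_null (t := ⋃ y : Finset.Iic n → V, cyl n (ex y) ∩ B) ?_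
    (measure_iUnion_null fun y => h _)
  intro w hw
  refine Set.mem_iUnion.2 ⟨fun k => w k, ?_, hw⟩
  intro k hk
  simp [ex, hk]

lemma IsAnnealed.ae_incr_notMem_box (hQ : IsAnnealed Q) {m : ℕ} {S : ℕ → Set V}
    (h : Q (box m S) = 0) : ∀ᵐ w ∂Q, ∀ n, incr n w ∉ box m S := by
  rw [ae_all_iff]
  intro n
  have : Q (incr n ⁻¹' box m S) = 0 :=
    measure_zero_of_cyl (n := n) fun x => le_antisymm ((hQ.box_le n x m S).trans_eq h) (zero_le)
  simp only [ae_iff, not_not]; exact this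

lemma IsAnnealed.ae_incr_notMem_stay (hQ : IsAnnealed Q) {T : Set V}
    (h : Q (stay T) = 0) : ∀ᵐ w ∂Q, ∀ n, incr n w ∉ stay T := by
  have := hQ.prob
  rw [ae_all_iff]
  intro n
  have : Q (incr n ⁻¹' stay T) = 0 := by
    refine measure_zero_of_cyl (n := n) fun x => le_antisymm ?_ (zero_le)
    have hlim := tendsto_measure_iInter_atTop (μ := Q)
      (fun m => (measurableSet_box m (fun _ => T)).nullMeasurableSet)
      (antitone_box T) ⟨0, measure_ne_top _ _⟩
    rw [← stay_eq_iInter, h] at hlim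
    refine ge_of_tendsto' hlim fun m => ?_
    refine le_trans (measure_mono ?_) (hQ.box_le n x m _)
    refine Set.inter_subset_inter_right _ (Set.preimage_mono ?_)
    rw [stay_eq_iInter]
    exact Set.iInter_subset _ m
  simp only [ae_iff, not_not]; exact this

lemma iSup_piLE : (⨆ n, (Filtration.piLE (X := fun _ : ℕ => V)) n) = MeasurableSpace.pi := by
  refine le_antisymm (iSup_le fun n => Filtration.piLE.le n) ?_
  refine iSup_le fun n => le_trans ?_ (le_iSup _ n)
  rintro _ ⟨s, hs, rfl⟩
  exact ⟨(fun y => y ⟨n, Set.mem_Iic.2 le_rfl⟩) ⁻¹' s, measurable_pi_apply (⟨n, Set.mem_Iic.2 le_rfl⟩ : Set.Iic n) hs, rfl⟩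

lemma measurableSet_cyl_piLE (n : ℕ) (x : ℕ → V) :
    MeasurableSet[(Filtration.piLE (X := fun _ : ℕ => V)) n] (cyl n x) := by
  refine ⟨{y | ∀ k : Set.Iic n, y k = x k}, ?_, ?_⟩
  · exact MeasurableSet.of_discrete
  · ext w; simp [cyl, Preorder.restrictLe]

/-- If at every record time the increments lie in `G` with conditional probability at least `p > 0`,
then almost surely, infinitely many records imply infinitely many records with increments in `G`.
The event `G` may depend on the whole future, so this is deduced from Lévy's upward theorem rather
than from the conditional Borel-Cantelli lemma. -/
lemma IsAnnealed.ae_frequently (hQ : IsAnnealed Q) {φ : V →+ ℝ} {G : Set (ℕ → V)}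
    (hG : MeasurableSet G) {p : ℝ≥0∞} (hp : p ≠ 0) (hpt : p ≠ ∞)
    (h : ∀ n x, IsRecord φ n x → Q (cyl n x) * p ≤ Q (cyl n x ∩ incr n ⁻¹' G)) :
    ∀ᵐ w ∂Q, (∃ᶠ n in atTop, IsRecord φ n w) →
      ∃ᶠ n in atTop, IsRecord φ n w ∧ incr n w ∈ G := by
  have := hQ.prob
  have hrec : ∀ n, MeasurableSet {w : ℕ → V | IsRecord φ n w} := by
    intro n
    have : {w : ℕ → V | IsRecord φ n w} = ⋂ i < n, {w : ℕ → V | φ (w i) < φ (w n)} := by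
      ext; simp [IsRecord]
    rw [this]
    refine MeasurableSet.iInter fun i => MeasurableSet.iInter fun _ => ?_
    have hm : ∀ j, Measurable fun w : ℕ → V => φ (w j) := fun j =>
      (Measurable.of_discrete (f := φ)).comp (measurable_pi_apply j)
    exact measurableSet_lt (hm i) (hm n)
  -- `A N`: some record at a time `n ≥ N` has increments in `G`.
  let A : ℕ → Set (ℕ → V) := fun N => ⋃ n ≥ N, {w | IsRecord φ n w} ∩ incr n ⁻¹' G
  have hA : ∀ N, MeasurableSet (A N) := fun N =>
    MeasurableSet.iUnion fun n => MeasurableSet.iUnion fun _ =>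
      (hrec n).inter (measurable_incr n hG)
  let f : ℕ → ℕ → (ℕ → V) → ℝ := fun N n =>
    Q[(A N).indicator (fun _ => (1 : ℝ)) | (Filtration.piLE (X := fun _ : ℕ => V)) n]
  have hlev : ∀ N, ∀ᵐ w ∂Q, Tendsto (fun n => f N n w) atTop
      (𝓝 ((A N).indicator (fun _ => (1 : ℝ)) w)) := by
    intro N
    refine Integrable.tendsto_ae_condExp ((integrable_const _).indicator (hA N)) ?_
    rw [iSup_piLE]
    exact (stronglyMeasurable_const).indicator (hA N)
  have hnull : ∀ᵐ w ∂Q, ∀ n, Q (cyl n w) ≠ 0 := by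
    rw [ae_all_iff]
    intro n
    rw [ae_iff]
    refine measure_zero_of_cyl (n := n) fun x => ?_
    by_cases hx : Q (cyl n x) = 0
    · exact measure_mono_null Set.inter_subset_left hx
    · convert measure_empty (μ := Q)
      ext w
      simp only [ne_eq, not_not, Set.mem_inter_iff, Set.mem_ofPred_eq, Set.mem_empty_iff_false,
        iff_false, not_and]
      intro hw
      rwa [cyl_congr hw]
  have hbound : ∀ᵐ w ∂Q, ∀ N, ∀ n ≥ N, IsRecord φ n w → p.toReal ≤ f N n w := by
    filter_upwards [hnull] with w hw N n hn hr
    -- The conditional expectation at time `n` is constant on cylinders of length `n`, so its value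
    -- at a point is the average over the cylinder of that point.
    have hdep : ∀ v ∈ cyl n w, f N n v = f N n w := by
      intro v hv
      exact stronglyMeasurable_condExp.dependsOn_of_piLE (fun k hk => hv k hk)
    have hint := setIntegral_condExp (μ := Q) (Filtration.piLE.le n)
      ((integrable_const (1 : ℝ)).indicator (hA N)) (measurableSet_cyl_piLE n w)
    rw [setIntegral_congr_fun (measurableSet_cyl n w) hdep, setIntegral_const,
      setIntegral_indicator (hA N), setIntegral_const, smul_eq_mul, smul_eq_mul, mul_one] at hint
    have hle : Q (cyl n w) * p ≤ Q (cyl n w ∩ A N) := by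
      refine (h n w hr).trans (measure_mono ?_)
      rintro v ⟨hv1, hv2⟩
      refine ⟨hv1, Set.mem_iUnion₂.2 ⟨n, hn, ?_, hv2⟩⟩
      intro i hi
      rw [hv1 i hi.le, hv1 n le_rfl]
      exact hr i hi
    have hle' := ENNReal.toReal_mono (measure_ne_top _ _) hle
    rw [ENNReal.toReal_mul] at hle'
    change _ ≤ Q.real _ at hle'
    rw [← hint] at hle'
    exact le_of_mul_le_mul_left hle' (ENNReal.toReal_pos (hw n) (measure_ne_top _ _))
  have hp0 : 0 < p.toReal := ENNReal.toReal_pos hp hpt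
  filter_upwards [ae_all_iff.2 hlev, hbound] with w hw hb hfr
  rw [frequently_atTop]
  intro N
  -- The conditional probabilities of `A N` converge to the indicator of `A N`, and they are at least
  -- `p` at infinitely many times.
  have hmem : w ∈ A N := by
    by_contra hcon
    have h1 := hw N
    rw [Set.indicator_of_notMem hcon] at h1
    obtain ⟨n, hn1, hn2, hn3⟩ :=
      (hfr.and_eventually ((eventually_ge_atTop N).and (h1.eventually_lt_const hp0))).exists
    exact absurd (hb N n hn2 hn1) (not_le.2 hn3)
  obtain ⟨n, hn, h1, h2⟩ := Set.mem_iUnion₂.1 hmem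
  exact ⟨n, hn, h1, h2⟩

/-! ### The zero-one law for annealed path laws -/

/-- A path whose supremum is not attained has infinitely many records. -/
lemma frequently_isRecord {φ : V →+ ℝ} {w : ℕ → V} (h : ¬ ∃ n, ∀ m, φ (w m) ≤ φ (w n)) :
    ∃ᶠ n in atTop, IsRecord φ n w := by
  push Not at h
  rw [frequently_atTop]
  intro N
  obtain ⟨j, -, hj⟩ := Finset.exists_max_image (Finset.range (N + 1)) (fun i => φ (w i)) ⟨0, by simp⟩
  have hex : ∃ m, φ (w j) < φ (w m) := h j
  have hspec := Nat.find_spec hex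
  have hmin : ∀ i < Nat.find hex, φ (w i) ≤ φ (w j) := fun i hi => not_lt.1 (Nat.find_min hex hi)
  refine ⟨Nat.find hex, ?_, fun i hi => (hmin i hi).trans_lt hspec⟩
  by_contra hlt
  exact absurd (hj _ (Finset.mem_range.2 (by omega))) (not_le.2 hspec)

/-- The level of the path tends to `+∞`. -/
def GoesUp (φ : V →+ ℝ) (w : ℕ → V) : Prop := Tendsto (fun n => φ (w n)) atTop atTop

/-- Almost surely, infinitely many records force the level to be unbounded above. Some upward step `s`
has positive probability, and it is taken at infinitely many records, each time raising the running
maximum by `φ s`. -/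
lemma IsAnnealed.unbounded_of_records (hQ : IsAnnealed Q) (φ : V →+ ℝ) :
    ∀ᵐ w ∂Q, (∃ᶠ n in atTop, IsRecord φ n w) → ¬ ∃ M, ∀ n, φ (w n) ≤ M := by
  have := hQ.prob
  -- The event that the first step is `s`; it uses only the environment at the starting site.
  let S : V → ℕ → Set V := fun s k => if k = 0 then {0} else {s}
  have hS : ∀ s n (w : ℕ → V), incr n w ∈ box 1 (S s) ↔ w (n + 1) - w n = s := by
    intro s n w
    constructor
    · intro h
      simpa [S, incr] using h 1 le_rfl
    · intro h k hk
      interval_cases k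
      · simp [S, incr]
      · simpa [S, incr] using h
  by_cases hs : ∃ s, 0 < φ s ∧ Q (box 1 (S s)) ≠ 0
  · obtain ⟨s, hs, hpos⟩ := hs
    filter_upwards [hQ.ae_frequently (φ := φ) (measurableSet_box 1 (S s)) hpos (measure_ne_top _ _)
      fun n x hx => hQ.box_indep hx fun k hk v hv => by
        obtain rfl : k = 0 := by omega
        simp only [S, if_true, Set.mem_singleton_iff] at hv
        simp [hv]] with w hw hrec
    rintro ⟨M, hM⟩
    have hfr := hw hrec
    have hgrow : ∀ j : ℕ, ∃ n, φ (w 0) + j * φ s ≤ φ (w n) := by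
      intro j
      induction j with
      | zero => exact ⟨0, by simp⟩
      | succ j ih =>
        obtain ⟨n, hn⟩ := ih
        obtain ⟨m, hm, hr, hst⟩ := frequently_atTop.1 hfr (n + 1)
        rw [hS] at hst
        refine ⟨m + 1, ?_⟩
        have h1 := hr n (by omega)
        have h2 : φ (w (m + 1)) = φ (w m) + φ s := by
          rw [← map_add, ← hst]; congr 1; abel
        push_cast
        linarith
    obtain ⟨j, hj⟩ := exists_nat_gt ((M - φ (w 0)) / φ s)
    obtain ⟨n, hn⟩ := hgrow j
    rw [div_lt_iff₀ hs] at hj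
    linarith [hM n]
  -- If no upward step has positive probability, then no record occurs after time `0`.
  · push Not at hs
    have hno : ∀ᵐ w ∂Q, ∀ s, 0 < φ s → ∀ n, w (n + 1) - w n ≠ s := by
      rw [ae_all_iff]
      intro s
      by_cases h : 0 < φ s
      · filter_upwards [hQ.ae_incr_notMem_box (hs s h)] with w hw _ n
        rw [ne_eq, ← hS]; exact hw n
      · exact .of_forall fun w h' => absurd h' h
    filter_upwards [hno] with w hw hrec
    obtain ⟨n, hn, hr⟩ := frequently_atTop.1 hrec 1
    obtain ⟨n, rfl⟩ : ∃ k, n = k + 1 := ⟨n - 1, by omega⟩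
    have h1 := hr n (by omega)
    exact absurd rfl (hw (w (n + 1) - w n) (by rw [map_sub]; linarith) n)

/-- If the walk has positive probability never to go below its starting level, then almost surely
infinitely many records imply transience upwards: above every level there is a record below which
the walk never falls again. -/
lemma IsAnnealed.goesUp_of_records (hQ : IsAnnealed Q) {φ : V →+ ℝ}
    (h : Q (stay {v | 0 ≤ φ v}) ≠ 0) :
    ∀ᵐ w ∂Q, (∃ᶠ n in atTop, IsRecord φ n w) → GoesUp φ w := by
  have := hQ.prob
  filter_upwards [hQ.ae_frequently (φ := φ) (measurableSet_stay _) h (measure_ne_top _ _)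
    fun n x hx => hQ.stay_indep hx fun v hv => hv, hQ.unbounded_of_records φ] with w h1 h2 hrec
  have hub := h2 hrec
  push Not at hub
  refine tendsto_atTop.2 fun M => ?_
  obtain ⟨m, hm⟩ := hub M
  obtain ⟨n, hn, hr, hst⟩ := frequently_atTop.1 (h1 hrec) (m + 1)
  filter_upwards [eventually_ge_atTop n] with k hk
  have h3 := hr m (by omega)
  have h4 : 0 ≤ φ (incr n w (k - n)) := hst (k - n)
  rw [incr, map_sub, show n + (k - n) = k by omega] at h4
  linarith

/-- If the walk attains its minimal level with positive probability, then it has positive probability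
never to go below its starting level. -/
lemma IsAnnealed.stay_ne_zero_of_min (hQ : IsAnnealed Q) {φ : V →+ ℝ}
    (h : ¬ ∀ᵐ w ∂Q, ¬ ∃ n, ∀ m, φ (w n) ≤ φ (w m)) : Q (stay {v | 0 ≤ φ v}) ≠ 0 := by
  intro h0
  refine h ?_
  filter_upwards [hQ.ae_incr_notMem_stay h0] with w hw
  rintro ⟨n, hn⟩
  refine hw n fun k => ?_
  have := hn (n + k)
  simp only [Set.mem_ofPred_eq, incr, map_sub]
  linarith

lemma GoesUp.exists_min {φ : V →+ ℝ} {w : ℕ → V} (h : GoesUp φ w) :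
    ∃ n, ∀ m, φ (w n) ≤ φ (w m) := by
  have := Filter.Tendsto.exists_forall_le (f := fun n => φ (w n)) (by rwa [Nat.cofinite_eq_atTop])
  exact this

lemma GoesUp.frequently {φ : V →+ ℝ} {w : ℕ → V} (h : GoesUp φ w) :
    ∃ᶠ n in atTop, IsRecord φ n w := by
  refine frequently_isRecord ?_
  rintro ⟨n, hn⟩
  obtain ⟨m, hm⟩ := (h.eventually_gt_atTop (φ (w n))).exists
  exact absurd (hn m) (not_le.2 hm)

/-- If upward transience has positive probability, then the walk is almost surely transient in one of
the two directions. -/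
theorem IsAnnealed.ae_transient (hQ : IsAnnealed Q) {φ : V →+ ℝ}
    (h : ¬ ∀ᵐ w ∂Q, ¬ GoesUp φ w) : ∀ᵐ w ∂Q, GoesUp φ w ∨ GoesUp (-φ) w := by
  have hpos : Q (stay {v | 0 ≤ φ v}) ≠ 0 :=
    hQ.stay_ne_zero_of_min fun h' => h (h'.mono fun w hw hup => hw hup.exists_min)
  have hup := hQ.goesUp_of_records hpos
  by_cases hmax : ∀ᵐ w ∂Q, ¬ ∃ n, ∀ m, φ (w m) ≤ φ (w n)
  · filter_upwards [hup, hmax] with w h1 h2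
    exact Or.inl (h1 (frequently_isRecord h2))
  have hneg : Q (stay {v | 0 ≤ (-φ) v}) ≠ 0 :=
    hQ.stay_ne_zero_of_min fun h' => hmax (h'.mono fun w hw => by simpa using hw)
  have hdown := hQ.goesUp_of_records hneg
  -- A walk confined to a bounded range of non-negative levels would be a trap met at some record,
  -- which is incompatible with upward transience.
  have htrap : ∀ j : ℕ, Q (stay {v | 0 ≤ φ v ∧ φ v ≤ j}) = 0 := by
    intro j
    by_contra hj
    have := hQ.prob
    refine h ?_
    filter_upwards [hQ.ae_frequently (φ := φ) (measurableSet_stay _) hj (measure_ne_top _ _)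
      fun n x hx => hQ.stay_indep hx fun v hv => hv.1] with w h1 hw
    obtain ⟨n, -, hn⟩ := (h1 hw.frequently).exists
    obtain ⟨k, hk1, hk2⟩ :=
      ((hw.eventually_gt_atTop (φ (w n) + j)).and (eventually_ge_atTop n)).exists
    have := (hn (k - n)).2
    rw [incr, map_sub, show n + (k - n) = k by omega] at this
    linarith
  filter_upwards [hup, hdown, ae_all_iff.2 fun j => hQ.ae_incr_notMem_stay (htrap j)]
    with w h1 h2 h3
  by_contra hcon
  push Not at hcon
  -- Otherwise the maximum and the minimum are both attained, and from the time of the minimum on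
  -- the walk is confined to a bounded range of levels.
  obtain ⟨a, ha⟩ : ∃ n, ∀ m, φ (w m) ≤ φ (w n) := by
    by_contra hc; exact hcon.1 (h1 (frequently_isRecord hc))
  obtain ⟨b, hb⟩ : ∃ n, ∀ m, (-φ) (w m) ≤ (-φ) (w n) := by
    by_contra hc; exact hcon.2 (h2 (frequently_isRecord hc))
  obtain ⟨j, hj⟩ := exists_nat_gt (φ (w a) - φ (w b))
  refine h3 j b fun k => ?_
  have h4 := hb (b + k)
  have h5 := ha (b + k)
  simp only [AddMonoidHom.neg_apply, neg_le_neg_iff] at h4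
  simp only [Set.mem_ofPred_eq, incr, map_sub]
  constructor <;> linarith

end Core

/-! ### The random walk in an i.i.d. environment -/

section Bridge

open ProbabilityTheory

variable {d : ℕ}

/-- The level `x ↦ x · l` as an additive homomorphism. -/
def levelHom (l : Fin d → ℝ) : Site d →+ ℝ where
  toFun x := dotR x l
  map_zero' := by simp [dotR]
  map_add' x y := by simp [dotR, add_mul, Finset.sum_add_distrib]

lemma EnvDist.prob_le_one (γ : EnvDist d) (v : Site d) : γ.prob v ≤ 1 := by
  by_cases h : γ.prob v = 0
  · simp [h]
  · obtain ⟨i, rfl⟩ := γ.support v h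
    rw [← γ.total]
    exact Finset.single_le_sum (f := fun i => γ.prob (stepVec d i)) (fun i _ => γ.nonneg _)
      (Finset.mem_univ i)

lemma measurable_prob (v : Site d) : Measurable fun γ : EnvDist d => γ.prob v :=
  (measurable_pi_apply v).comp (comap_measurable EnvDist.prob)

lemma pathWeight_nonneg (ω : EnvOmega d) (n : ℕ) (x : ℕ → Site d) : 0 ≤ pathWeight ω n x :=
  Finset.prod_nonneg fun _ _ => (ω _).nonneg _

lemma pathWeight_le_one (ω : EnvOmega d) (n : ℕ) (x : ℕ → Site d) : pathWeight ω n x ≤ 1 :=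
  Finset.prod_le_one (fun _ _ => (ω _).nonneg _) fun _ _ => (ω _).prob_le_one _

/-- The weight of the first `n` steps depends only on the environment at the sites visited before
time `n`. -/
lemma measurable_pathWeight_iSup (n : ℕ) (x : ℕ → Site d) :
    Measurable[⨆ i ∈ {v | ∃ k < n, x k = v},
      MeasurableSpace.comap (fun ω : EnvOmega d => ω i) inferInstance]
      (fun ω : EnvOmega d => pathWeight ω n x) := by
  refine Finset.measurable_prod _ fun k hk => ?_
  have h1 : Measurable[MeasurableSpace.comap (fun ω : EnvOmega d => ω (x k)) inferInstance]
      (fun ω : EnvOmega d => (ω (x k)).prob (x (k + 1) - x k)) :=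
    (measurable_prob _).comp (comap_measurable _)
  refine h1.mono ?_ le_rfl
  exact le_iSup₂ (f := fun (i : Site d) (_ : i ∈ {v | ∃ k < n, x k = v}) =>
    MeasurableSpace.comap (fun ω : EnvOmega d => ω i) inferInstance) (x k)
    ⟨k, Finset.mem_range.1 hk, rfl⟩

lemma measurable_pathWeight (n : ℕ) (x : ℕ → Site d) :
    Measurable (fun ω : EnvOmega d => pathWeight ω n x) :=
  Finset.measurable_prod _ fun _ _ => (measurable_prob _).comp (measurable_pi_apply _)

lemma pathWeight_add (ω : EnvOmega d) (n m : ℕ) (x : ℕ → Site d) :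
    pathWeight ω (n + m) x = pathWeight ω n x * pathWeight ω m (fun k => x (n + k)) := by
  simp only [pathWeight, Finset.prod_range_add, add_assoc]

lemma integrable_pathWeight (ν : Measure (EnvOmega d)) [IsFiniteMeasure ν] (n : ℕ)
    (x : ℕ → Site d) : Integrable (fun ω => pathWeight ω n x) ν := by
  refine Integrable.of_bound (measurable_pathWeight n x).aestronglyMeasurable 1 (.of_forall fun ω => ?_)
  rw [Real.norm_of_nonneg (pathWeight_nonneg ω n x)]
  exact pathWeight_le_one ω n x

lemma IsIIDEnv.eq_infinitePi {μ : Measure (EnvDist d)} {ν : Measure (EnvOmega d)}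
    (h : IsIIDEnv μ ν) [IsProbabilityMeasure μ] : ν = Measure.infinitePi fun _ => μ := by
  refine Measure.eq_infinitePi _ fun s t ht => ?_
  rw [← h.2.2 s t fun x _ => ht x]
  rfl

lemma integral_pathWeight_translate (μ : Measure (EnvDist d)) [IsProbabilityMeasure μ] (n : ℕ)
    (x : ℕ → Site d) (z : Site d) :
    ∫ ω, pathWeight ω n (fun k => x k - z) ∂(Measure.infinitePi fun _ : Site d => μ) =
      ∫ ω, pathWeight ω n x ∂(Measure.infinitePi fun _ : Site d => μ) := by
  let T : EnvOmega d → EnvOmega d := fun ω v => ω (v + z)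
  have hT : Measurable T := measurable_pi_lambda _ fun v => measurable_pi_apply _
  have hmap : (Measure.infinitePi fun _ : Site d => μ).map T =
      Measure.infinitePi fun _ : Site d => μ := by
    refine Measure.eq_infinitePi _ fun s t ht => ?_
    rw [Measure.map_apply hT (MeasurableSet.pi s.countable_toSet fun i _ => ht i)]
    have : T ⁻¹' Set.pi s t =
        Set.pi (s.map (Equiv.addRight z).toEmbedding : Finset (Site d)) (fun v => t (v - z)) := by
      ext ω
      simp only [T, Set.mem_preimage, Set.mem_pi, Finset.mem_coe, Finset.mem_map]
      constructor
      · rintro H _ ⟨i, hi, rfl⟩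
        simpa using H i hi
      · intro H i hi
        simpa using H (i + z) ⟨i, hi, rfl⟩
    rw [this, Measure.infinitePi_pi _ fun i _ => ht _]
    simp
  nth_rewrite 1 [← hmap]
  rw [integral_map hT.aemeasurable (measurable_pathWeight n _).aestronglyMeasurable]
  simp [pathWeight, T]

/-- The annealed weight factorizes over two pieces of path that use disjoint sets of sites. -/
lemma integral_pathWeight_add (μ : Measure (EnvDist d)) [IsProbabilityMeasure μ] (n m : ℕ)
    (x : ℕ → Site d) (h : ∀ i < n, ∀ j < m, x i ≠ x (n + j)) :
    ∫ ω, pathWeight ω (n + m) x ∂(Measure.infinitePi fun _ : Site d => μ) =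
      (∫ ω, pathWeight ω n x ∂(Measure.infinitePi fun _ : Site d => μ)) *
      ∫ ω, pathWeight ω m (fun k => x (n + k)) ∂(Measure.infinitePi fun _ : Site d => μ) := by
  simp only [pathWeight_add]
  have hind : iIndep (fun i : Site d =>
      MeasurableSpace.comap (fun ω : EnvOmega d => ω i) inferInstance)
      (Measure.infinitePi fun _ : Site d => μ) :=
    iIndepFun_infinitePi (P := fun _ : Site d => μ) (X := fun _ γ => γ) fun _ => measurable_id
  have hdisj : Disjoint {v | ∃ k < n, x k = v} {v | ∃ k < m, x (n + k) = v} := by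
    rw [Set.disjoint_left]
    rintro _ ⟨i, hi, rfl⟩ ⟨j, hj, hij⟩
    exact h i hi j hj hij.symm
  have hsp := indep_iSup_of_disjoint (fun i => (measurable_pi_apply i).comap_le) hind hdisj
  have hfun : IndepFun (fun ω : EnvOmega d => pathWeight ω n x)
      (fun ω => pathWeight ω m (fun k => x (n + k))) (Measure.infinitePi fun _ : Site d => μ) := by
    rw [IndepFun_iff_Indep]
    exact indep_of_indep_of_le_left (indep_of_indep_of_le_right hsp
      (measurable_pathWeight_iSup m _).comap_le) (measurable_pathWeight_iSup n x).comap_le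
  exact hfun.integral_fun_mul_eq_mul_integral (measurable_pathWeight n x).aestronglyMeasurable
    (measurable_pathWeight m _).aestronglyMeasurable

/-- The path marginal of the annealed law of the walk is an annealed path law in the sense of
`IsAnnealed`. -/
theorem IsRWRE.isAnnealed {μ : Measure (EnvDist d)} {P : Measure (RWSpace d)} (hP : IsRWRE μ P) :
    IsAnnealed (P.map Prod.snd) := by
  obtain ⟨hprob, hiid, hc⟩ := hP
  have hμ := hiid.1
  have hν := hiid.eq_infinitePi
  have hQ : IsProbabilityMeasure (P.map (Prod.snd : RWSpace d → PathSpace d)) :=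
    Measure.isProbabilityMeasure_map measurable_snd.aemeasurable
  have hcyl : ∀ (n : ℕ) (x : ℕ → Site d), (P.map Prod.snd) (cyl n x) = ENNReal.ofReal
      ((if x 0 = 0 then (1 : ℝ) else 0) *
        ∫ ω, pathWeight ω n x ∂(Measure.infinitePi fun _ : Site d => μ)) := by
    intro n x
    have := hc n x Set.univ MeasurableSet.univ
    rw [Measure.restrict_univ, hν] at this
    rw [← this, ENNReal.ofReal_toReal (measure_ne_top _ _),
      Measure.map_apply measurable_snd (measurableSet_cyl n x)]
    simp [cyl, Set.preimage]
  have hcyl0 : ∀ (m n : ℕ) (x : ℕ → Site d), (P.map Prod.snd) (cyl m (incr n x)) = ENNReal.ofReal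
      (∫ ω, pathWeight ω m (fun k => x (n + k)) ∂(Measure.infinitePi fun _ : Site d => μ)) := by
    intro m n x
    rw [hcyl, if_pos (by simp [incr]), one_mul]
    congr 1
    exact integral_pathWeight_translate μ m (fun k => x (n + k)) (x n)
  have hnn : ∀ (n : ℕ) (x : ℕ → Site d),
      0 ≤ ∫ ω, pathWeight ω n x ∂(Measure.infinitePi fun _ : Site d => μ) := fun n x =>
    integral_nonneg fun ω => pathWeight_nonneg ω n x
  refine ⟨hQ, ?_, ?_, ?_⟩
  · rw [ae_iff]
    refine measure_zero_of_cyl (n := 0) fun x => ?_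
    by_cases hx : x 0 = 0
    · convert measure_empty (μ := P.map (Prod.snd : RWSpace d → PathSpace d))
      ext w
      simp only [cyl, Set.mem_inter_iff, Set.mem_ofPred_eq, Set.mem_empty_iff_false, iff_false,
        not_and, not_not]
      intro h
      rw [h 0 le_rfl, hx]
    · refine measure_mono_null Set.inter_subset_left ?_
      rw [hcyl, if_neg hx, zero_mul, ENNReal.ofReal_zero]
  · intro n m x hx
    rw [hcyl, hcyl, hcyl0, integral_pathWeight_add μ n m x hx, ← ENNReal.ofReal_mul, mul_assoc]
    exact mul_nonneg (by split_ifs <;> norm_num) (hnn n x)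
  · intro n m x
    rw [hcyl, hcyl0]
    refine ENNReal.ofReal_le_ofReal ?_
    calc _ ≤ 1 * ∫ ω, pathWeight ω (n + m) x ∂(Measure.infinitePi fun _ : Site d => μ) := by
          gcongr
          · exact hnn _ _
          · split_ifs <;> norm_num
      _ ≤ _ := by
          rw [one_mul]
          refine integral_mono (integrable_pathWeight _ _ _) (integrable_pathWeight _ _ _) fun ω => ?_
          simp only [pathWeight_add]
          exact mul_le_of_le_one_left (pathWeight_nonneg _ _ _) (pathWeight_le_one _ _ _)

end Bridge

/-- the annealed probability `P(A_+(ℓ) ∪ A_-(ℓ))` is 0 or 1. -/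
theorem stmt1 {d : ℕ} (hd : 2 ≤ d) (μ : Measure (EnvDist d))
    (P : Measure (RWSpace d)) (hP : IsRWRE μ P) (l : Fin d → ℝ) (hl : l ≠ 0) :
    P {q : RWSpace d | Tendsto (fun n => dotR (q.2 n) l) atTop atTop ∨
        Tendsto (fun n => dotR (q.2 n) l) atTop atBot} = 0 ∨
    P {q : RWSpace d | Tendsto (fun n => dotR (q.2 n) l) atTop atTop ∨
        Tendsto (fun n => dotR (q.2 n) l) atTop atBot} = 1 := by
  have hQ := hP.isAnnealed
  have hprob := hP.1
  have hup : ∀ w : PathSpace d, GoesUp (levelHom l) w ↔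
      Tendsto (fun n => dotR (w n) l) atTop atTop := fun w => Iff.rfl
  have hdown : ∀ w : PathSpace d, GoesUp (-levelHom l) w ↔
      Tendsto (fun n => dotR (w n) l) atTop atBot := fun w =>
    tendsto_neg_atTop_iff (f := fun n => dotR (w n) l)
  simp only [← hup, ← hdown]
  by_cases h : ∀ᵐ w ∂(P.map Prod.snd), ¬ (GoesUp (levelHom l) w ∨ GoesUp (-levelHom l) w)
  · left
    have := ae_of_ae_map measurable_snd.aemeasurable h
    simpa only [ae_iff, not_not] using this
  · right
    have hae : ∀ᵐ w ∂(P.map Prod.snd), GoesUp (levelHom l) w ∨ GoesUp (-levelHom l) w := by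
      by_cases h1 : ∀ᵐ w ∂(P.map Prod.snd), ¬ GoesUp (levelHom l) w
      · have h2 : ¬ ∀ᵐ w ∂(P.map Prod.snd), ¬ GoesUp (-levelHom l) w := fun h2 =>
          h (by filter_upwards [h1, h2] with w a b using not_or.2 ⟨a, b⟩)
        filter_upwards [hQ.ae_transient h2] with w hw
        rw [neg_neg] at hw
        exact hw.symm
      · exact hQ.ae_transient h1
    have := ae_of_ae_map measurable_snd.aemeasurable hae
    rw [← measure_univ (μ := P)]
    exact measure_congr (eventuallyEq_univ.2 this)
end
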